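/- arXiv:math/9302207 — 3 statements merged into one kernel-verified Lean document; each statement's English description precedes it below -/
import Mathlib

section
/- Let 1 ≤ q < p ≤ ∞ and define r by 1/q = 1/p + 1/r, and suppose 1 ≤ r < 2. Then there is a constant c_r (depending only on r) such that for every bounded linear operator T : X → Y between real Banach spaces whose rank is at most n one has π_{p,q}(T) ≤ c_r · π_{p,q}^n(T). -/
open scoped ENNReal NNReal BigOperators

noncomputable section

/-- The `ℓ_p`-sum `(∑ i, f i ^ p) ^ (1/p)` of a finite family in `ℝ≥0∞`,
with the usual sup-modification for `p = ∞`. -/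
def eSum (p : ℝ≥0∞) {ι : Type*} [Fintype ι] (f : ι → ℝ≥0∞) : ℝ≥0∞ :=
  if p = ∞ then ⨆ i, f i else (∑ i, f i ^ p.toReal) ^ (1 / p.toReal)

/-- The weak `ℓ_q`-norm of a finite family of vectors:
`sup { (∑ k |⟨x_k, x*⟩|^q)^(1/q) : x* in the unit ball of the dual }`. -/
def weakLq (q : ℝ≥0∞) {X : Type*} [NormedAddCommGroup X] [NormedSpace ℝ X]
    {n : ℕ} (x : Fin n → X) : ℝ≥0∞ :=
  ⨆ f : {f : X →L[ℝ] ℝ // ‖f‖ ≤ 1}, eSum q fun k => ENNReal.ofReal |f.1 (x k)|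

/-- The `(p,q)`-summing norm of `T` with respect to `n` vectors. -/
def piN (p q : ℝ≥0∞) {X Y : Type*} [NormedAddCommGroup X] [NormedSpace ℝ X]
    [NormedAddCommGroup Y] [NormedSpace ℝ Y] (n : ℕ) (T : X →L[ℝ] Y) : ℝ≥0∞ :=
  ⨆ x : {x : Fin n → X // weakLq q x ≤ 1}, eSum p fun k => ENNReal.ofReal ‖T (x.1 k)‖

/-- The `(p,q)`-summing norm of `T`. -/
def piPQ (p q : ℝ≥0∞) {X Y : Type*} [NormedAddCommGroup X] [NormedSpace ℝ X]
    [NormedAddCommGroup Y] [NormedSpace ℝ Y] (T : X →L[ℝ] Y) : ℝ≥0∞ :=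
  ⨆ n : ℕ, piN p q n T

/-- `T` has rank at most `n`: its range is a finite-dimensional subspace of
dimension at most `n`. -/
def RankLE {X Y : Type*} [NormedAddCommGroup X] [NormedSpace ℝ X]
    [NormedAddCommGroup Y] [NormedSpace ℝ Y] (T : X →L[ℝ] Y) (n : ℕ) : Prop :=
  FiniteDimensional ℝ (LinearMap.range (T : X →ₗ[ℝ] Y)) ∧
    Module.finrank ℝ (LinearMap.range (T : X →ₗ[ℝ] Y)) ≤ n

/-- The average of `‖∑ k, ε k • x k‖²` over all `2^n` sign choices `ε ∈ {-1,1}^n`. -/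
def radAvg {X : Type*} [NormedAddCommGroup X] [NormedSpace ℝ X] {n : ℕ}
    (x : Fin n → X) : ℝ :=
  (∑ ε : Fin n → Bool, ‖∑ k, (if ε k then (1 : ℝ) else -1) • x k‖ ^ 2) / 2 ^ n

/-- The Rademacher cotype `q` constant of `T` with respect to `n` vectors. -/
def cotypeN (q : ℝ) {X Y : Type*} [NormedAddCommGroup X] [NormedSpace ℝ X]
    [NormedAddCommGroup Y] [NormedSpace ℝ Y] (n : ℕ) (T : X →L[ℝ] Y) : ℝ≥0∞ :=
  ⨆ x : {x : Fin n → X // Real.sqrt (radAvg x) ≤ 1},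
    (∑ k, ENNReal.ofReal ‖T (x.1 k)‖ ^ q) ^ (1 / q)

/-- The Rademacher cotype `q` constant of `T`. -/
def cotype (q : ℝ) {X Y : Type*} [NormedAddCommGroup X] [NormedSpace ℝ X]
    [NormedAddCommGroup Y] [NormedSpace ℝ Y] (T : X →L[ℝ] Y) : ℝ≥0∞ :=
  ⨆ n : ℕ, cotypeN q n T



/-- trace inequality -/
lemma trace_sq_le {ι : Type*} [Fintype ι] (W : Submodule ℝ (EuclideanSpace ℝ ι)) (n : ℕ)
    (hW : Module.finrank ℝ W ≤ n) (w : ι → EuclideanSpace ℝ ι) (hw : ∀ l, w l ∈ W) :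
    (∑ l, w l l) ^ 2 ≤ n * ∑ l, ∑ k, (w l k) ^ 2 := by
  classical
  let u := stdOrthonormalBasis ℝ W
  have h1 : ∀ l, w l l = ∑ i, (inner ℝ (u i) (⟨w l, hw l⟩ : W)) * ((u i : EuclideanSpace ℝ ι) l) := by
    intro l
    have := u.sum_repr' (⟨w l, hw l⟩ : W)
    have h2 := congrArg (fun v : W => (v : EuclideanSpace ℝ ι) l) this
    simp only [Submodule.coe_sum, Submodule.coe_smul, WithLp.ofLp_sum, Finset.sum_apply,
      PiLp.smul_apply, smul_eq_mul] at h2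
    exact h2.symm
  have h3 : ∀ l, ∑ i, (inner ℝ (u i) (⟨w l, hw l⟩ : W)) ^ 2 = ∑ k, (w l k) ^ 2 := by
    intro l
    have := u.sum_sq_norm_inner_right (⟨w l, hw l⟩ : W)
    simp only [Real.norm_eq_abs, sq_abs] at this
    rw [this, Submodule.coe_norm, EuclideanSpace.real_norm_sq_eq]
  have h4 : ∀ i, ∑ k, ((u i : EuclideanSpace ℝ ι) k) ^ 2 = 1 := by
    intro i
    rw [← EuclideanSpace.real_norm_sq_eq, ← Submodule.coe_norm, u.orthonormal.1 i]; norm_num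
  have h5 : ∑ l, w l l = ∑ x : ι × Fin (Module.finrank ℝ W),
      (inner ℝ (u x.2) (⟨w x.1, hw x.1⟩ : W)) * ((u x.2 : EuclideanSpace ℝ ι) x.1) := by
    rw [Fintype.sum_prod_type]
    exact Finset.sum_congr rfl fun l _ => h1 l
  rw [h5]
  refine (Finset.sum_mul_sq_le_sq_mul_sq _ _ _).trans ?_
  rw [Fintype.sum_prod_type, Fintype.sum_prod_type_right, mul_comm]
  simp only [h3, h4]
  have : ((Module.finrank ℝ W : ℕ) : ℝ) ≤ n := by exact_mod_cast hW
  simp only [Finset.sum_const, Finset.card_univ, Fintype.card_fin, nsmul_eq_mul, mul_one]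
  exact mul_le_mul_of_nonneg_right this (by positivity)

/-- weak `ℓ_r` lemma -/
lemma weak_lr {ι : Type*} (I : Finset ι) (g : ι → ℝ) (r : ℝ) (hr2 : r < 2)
    (hg0 : ∀ l ∈ I, 0 ≤ g l) (hg1 : ∀ l ∈ I, g l ≤ 1) (B : ℝ) (hB : 0 < B)
    (hs : B ≤ ∑ l ∈ I, g l ^ 2) :
    ∃ t : ℝ, 0 < t ∧ t ≤ 1 ∧
      (1 - (2:ℝ) ^ (r - 2)) / 8 * B ≤ ((I.filter fun l => t ≤ g l).card : ℝ) * t ^ r := by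
  classical
  by_contra hcon
  push Not at hcon
  set ρ : ℝ := (2:ℝ) ^ (r - 2) with hρ
  have hρ0 : 0 < ρ := by positivity
  have hρ1 : ρ < 1 := Real.rpow_lt_one_of_one_lt_of_neg (by norm_num) (by linarith)
  set K := (1 - ρ) / 8 * B with hK
  have hK0 : 0 < K := by have : 0 < 1 - ρ := by linarith
                         positivity
  set J := I.filter fun l => 0 < g l with hJ
  have hex : ∀ l, ∃ i : ℕ, l ∈ J → ((1/2:ℝ) ^ (i+1) < g l ∧ g l ≤ (1/2:ℝ) ^ i) := by
    intro l
    by_cases hl : l ∈ J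
    · have hl' := Finset.mem_filter.1 hl
      obtain ⟨i, hi⟩ := exists_nat_pow_near_of_lt_one hl'.2 (hg1 l hl'.1) (y := (1/2:ℝ)) (by norm_num) (by norm_num)
      exact ⟨i, fun _ => hi⟩
    · exact ⟨0, fun h => absurd h hl⟩
  choose lev hlev using hex
  have e1 : ∑ l ∈ I, g l ^ 2 = ∑ l ∈ J, g l ^ 2 := by
    symm
    apply Finset.sum_subset (Finset.filter_subset _ _)
    intro l hl hl'
    have : ¬ 0 < g l := fun h => hl' (Finset.mem_filter.2 ⟨hl, h⟩)
    have : g l = 0 := le_antisymm (not_lt.1 this) (hg0 l hl)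
    simp [this]
  have e2 : ∑ l ∈ J, g l ^ 2 ≤ ∑ l ∈ J, (1/4:ℝ) ^ (lev l) := by
    apply Finset.sum_le_sum
    intro l hl
    have h := (hlev l hl).2
    have h0 := (Finset.mem_filter.1 hl).2
    calc g l ^ 2 ≤ ((1/2:ℝ) ^ lev l) ^ 2 := pow_le_pow_left₀ h0.le h 2
      _ = (1/4:ℝ) ^ (lev l) := by rw [← pow_mul, mul_comm, pow_mul]; norm_num
  have e3 : ∑ l ∈ J, (1/4:ℝ) ^ (lev l) = ∑ i ∈ J.image lev, ((J.filter fun l => lev l = i).card) • (1/4:ℝ) ^ i :=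
    Finset.sum_comp (fun i : ℕ => (1/4:ℝ) ^ i) lev
  have e4 : ∀ i, ((J.filter fun l => lev l = i).card) • (1/4:ℝ) ^ i ≤ 4 * K * ρ ^ i := by
    intro i
    have h1 : ((J.filter fun l => lev l = i).card : ℝ) ≤ ((I.filter fun l => (1/2:ℝ)^(i+1) ≤ g l).card : ℝ) := by
      norm_cast
      apply Finset.card_le_card
      intro l hl
      have hl' := Finset.mem_filter.1 hl
      have hh := (hlev l hl'.1).1
      rw [hl'.2] at hh
      exact Finset.mem_filter.2 ⟨(Finset.mem_filter.1 hl'.1).1, hh.le⟩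
    have h2 := hcon ((1/2:ℝ)^(i+1)) (by positivity) (pow_le_one₀ (by norm_num) (by norm_num))
    set t : ℝ := (1/2:ℝ)^(i+1) with ht
    have h3 : (1/4:ℝ)^i ≤ 4 * ρ ^ i * t ^ r := by
      have ht' : t = (2:ℝ) ^ (-((i:ℝ)+1)) := by
        rw [Real.rpow_neg (by norm_num), ht, one_div, inv_pow]; norm_cast
      have h4 : (1/4:ℝ)^i = (2:ℝ) ^ (-(2:ℝ) * i) := by
        rw [Real.rpow_mul (by norm_num), Real.rpow_natCast]
        norm_num [Real.rpow_neg]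
      have h5 : ρ ^ i = (2:ℝ) ^ ((r-2) * i) := by
        rw [Real.rpow_mul (by norm_num), Real.rpow_natCast]
      have h6 : (4:ℝ) = (2:ℝ) ^ (2:ℝ) := by norm_num
      rw [h4, h5, ht', ← Real.rpow_mul (by norm_num), h6, ← Real.rpow_add (by norm_num), ← Real.rpow_add (by norm_num)]
      apply Real.rpow_le_rpow_of_exponent_le (by norm_num)
      nlinarith
    rw [nsmul_eq_mul]
    calc _ ≤ ((I.filter fun l => t ≤ g l).card : ℝ) * (4 * ρ ^ i * t ^ r) := by
          apply mul_le_mul h1 h3 (by positivity) (by positivity)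
      _ = 4 * ρ ^ i * (((I.filter fun l => t ≤ g l).card : ℝ) * t ^ r) := by ring
      _ ≤ 4 * ρ ^ i * K := by
          apply mul_le_mul_of_nonneg_left h2.le (by positivity)
      _ = _ := by ring
  have e5 : ∑ i ∈ J.image lev, ρ ^ i ≤ (1 - ρ)⁻¹ := by
    rw [← tsum_geometric_of_lt_one hρ0.le hρ1]
    exact (summable_geometric_of_lt_one hρ0.le hρ1).sum_le_tsum _ (fun i _ => by positivity)
  have e6 : B ≤ 4 * K * (1 - ρ)⁻¹ := by
    calc B ≤ ∑ i ∈ J.image lev, ((J.filter fun l => lev l = i).card) • (1/4:ℝ) ^ i := by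
          rw [← e3]; exact hs.trans (e1.le.trans e2)
      _ ≤ ∑ i ∈ J.image lev, 4 * K * ρ ^ i := Finset.sum_le_sum fun i _ => e4 i
      _ = 4 * K * ∑ i ∈ J.image lev, ρ ^ i := by rw [Finset.mul_sum]
      _ ≤ _ := by apply mul_le_mul_of_nonneg_left e5 (by positivity)
  have : 4 * K * (1 - ρ)⁻¹ = B / 2 := by
    have : 1 - ρ ≠ 0 := by linarith
    rw [hK]; field_simp; norm_num
  linarith

lemma exists_row {X Y : Type*} [NormedAddCommGroup X] [NormedSpace ℝ X]
    [NormedAddCommGroup Y] [NormedSpace ℝ Y] (T : X →L[ℝ] Y) (n : ℕ)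
    (hfin : FiniteDimensional ℝ (LinearMap.range (T : X →ₗ[ℝ] Y)))
    (hrank : Module.finrank ℝ (LinearMap.range (T : X →ₗ[ℝ] Y)) ≤ n)
    {ι : Type*} (I : Finset ι) (x : ι → X) (hx : ∀ k ∈ I, T (x k) ≠ 0)
    (B : ℝ) (hB : 0 < B) (hBn : B * n ≤ I.card) (hI : I.Nonempty) :
    ∃ φ : Y →L[ℝ] ℝ, ‖φ‖ ≤ 1 ∧ B ≤ ∑ l ∈ I, (|φ (T (x l))| / ‖T (x l)‖) ^ 2 := by
  classical
  by_contra hcon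
  push Not at hcon
  have hφ : ∀ k : I, ∃ φ : Y →L[ℝ] ℝ, ‖φ‖ = 1 ∧ φ (T (x k)) = ‖T (x k)‖ := by
    intro k
    obtain ⟨φ, h1, h2⟩ := exists_dual_vector ℝ (T (x k)) (norm_ne_zero_iff.2 (hx k k.2))
    exact ⟨φ, h1, by simpa using h2⟩
  choose φ hφ1 hφ2 using hφ
  let Λ : Y →ₗ[ℝ] EuclideanSpace ℝ I :=
    (WithLp.linearEquiv 2 ℝ (I → ℝ)).symm.toLinearMap ∘ₗ LinearMap.pi (fun k => (φ k : Y →ₗ[ℝ] ℝ))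
  have hΛ : ∀ y k, Λ y k = φ k y := by intro y k; simp [Λ]
  let W := (LinearMap.range (T : X →ₗ[ℝ] Y)).map Λ
  have hW : Module.finrank ℝ W ≤ n := (Submodule.finrank_map_le Λ _).trans hrank
  have key := trace_sq_le W n hW (fun l => Λ (‖T (x l)‖⁻¹ • T (x l))) (by
    intro l
    apply Submodule.mem_map_of_mem
    exact Submodule.smul_mem _ _ ⟨x l, rfl⟩)
  simp only [map_smul, PiLp.smul_apply, hΛ, smul_eq_mul] at key
  have h1 : ∑ l : I, ‖T (x l)‖⁻¹ * φ l (T (x l)) = I.card := by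
    rw [Finset.sum_congr rfl (g := fun _ => (1:ℝ))]
    · simp
    · intro l _
      rw [hφ2, inv_mul_cancel₀ (norm_ne_zero_iff.2 (hx l l.2))]
  rw [h1, Finset.sum_comm] at key
  have h2 : ∑ k : I, ∑ l : I, (‖T (x l)‖⁻¹ * φ k (T (x l))) ^ 2 < ∑ k : I, B := by
    apply Finset.sum_lt_sum_of_nonempty
    · simpa using hI
    · intro k _
      have := hcon (φ k) (hφ1 k).le
      rw [← Finset.sum_coe_sort] at this
      convert this using 2 with l
      rw [mul_pow, div_pow, sq_abs, inv_pow, div_eq_inv_mul]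
  simp only [Finset.sum_const, Finset.card_univ, Fintype.card_coe, nsmul_eq_mul] at h2
  have hc : (0:ℝ) < I.card := by exact_mod_cast hI.card_pos
  rcases Nat.eq_zero_or_pos n with hn | hn
  · subst hn; simp at key; exact hI.ne_empty key
  have hn' : (0:ℝ) < n := by exact_mod_cast hn
  have h3 := mul_lt_mul_of_pos_left h2 hn'
  nlinarith

lemma step {X Y : Type*} [NormedAddCommGroup X] [NormedSpace ℝ X]
    [NormedAddCommGroup Y] [NormedSpace ℝ Y] (T : X →L[ℝ] Y) (n : ℕ)
    (hfin : FiniteDimensional ℝ (LinearMap.range (T : X →ₗ[ℝ] Y)))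
    (hrank : Module.finrank ℝ (LinearMap.range (T : X →ₗ[ℝ] Y)) ≤ n)
    (p q r : ℝ) (hr1 : 1 ≤ r) (hr2 : r < 2) (hq : 1 ≤ q) (hp : 0 < p) (hpqr : 1 / q = 1 / p + 1 / r)
    {ι : Type*} (I : Finset ι) (x : ι → X) (s : ℝ) (hs : 0 < s) (hx : ∀ k ∈ I, s ≤ ‖T (x k)‖)
    (B : ℝ) (hB : 0 < B) (hBn : B * n ≤ I.card) (hI : I.Nonempty) :
    ∃ A ⊆ I, ∃ z : X, (1 - (2:ℝ) ^ (r - 2)) / 8 * B ≤ A.card ∧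
      (∀ f : X →L[ℝ] ℝ, |f z| ^ q ≤ ∑ l ∈ A, |f (x l)| ^ q) ∧
      s ^ p * A.card * ((1 - (2:ℝ) ^ (r - 2)) / 8 * B) ^ (p / r) ≤ ‖T z‖ ^ p := by
  classical
  have hpos : ∀ k ∈ I, 0 < ‖T (x k)‖ := fun k hk => hs.trans_le (hx k hk)
  obtain ⟨φ, hφ, hsum⟩ := exists_row T n hfin hrank I x (fun k hk => norm_pos_iff.1 (hpos k hk)) B hB hBn hI
  obtain ⟨t, ht0, ht1, hcard⟩ := weak_lr I (fun l => |φ (T (x l))| / ‖T (x l)‖) r hr2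
    (fun l _ => by positivity) (fun l hl => by
      rw [div_le_one (hpos l hl)]
      calc |φ (T (x l))| ≤ ‖φ‖ * ‖T (x l)‖ := φ.le_opNorm _
        _ ≤ 1 * ‖T (x l)‖ := by gcongr
        _ = _ := one_mul _) B hB hsum
  have hρ1 : (2:ℝ) ^ (r - 2) < 1 := Real.rpow_lt_one_of_one_lt_of_neg (by norm_num) (by linarith)
  set K := (1 - (2:ℝ) ^ (r - 2)) / 8 * B with hK
  have hK0 : 0 < K := by
    have : 0 < 1 - (2:ℝ) ^ (r - 2) := by linarith
    positivity
  set A := I.filter fun l => t ≤ |φ (T (x l))| / ‖T (x l)‖ with hA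
  have htr : t ^ r ≤ 1 := Real.rpow_le_one ht0.le ht1 (by linarith)
  have htr0 : 0 < t ^ r := by positivity
  have hKA : K ≤ A.card := hcard.trans (mul_le_of_le_one_right (by positivity) htr)
  set a : ℝ := (A.card : ℝ) with ha
  have ha0 : 0 < a := hK0.trans_le hKA
  let τ : ι → ℝ := fun l => SignType.sign (φ (T (x l))) * (s / ‖T (x l)‖)
  have hτ : ∀ l ∈ A, |τ l| ≤ 1 := by
    intro l hl
    have hl' := (Finset.mem_filter.1 hl).1
    have h1 : |s / ‖T (x l)‖| ≤ 1 := by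
      rw [abs_of_nonneg (by positivity), div_le_one (hpos l hl')]; exact hx l hl'
    have h2 : |((SignType.sign (φ (T (x l))) : SignType) : ℝ)| ≤ 1 := by
      rcases SignType.sign (φ (T (x l))) with _ | _ | _ <;> simp
    rw [abs_mul]
    exact mul_le_one₀ h2 (abs_nonneg _) h1
  refine ⟨A, Finset.filter_subset _ _, a ^ (1 / q - 1) • ∑ l ∈ A, τ l • x l, hKA, ?_, ?_⟩
  · intro f
    have h1 : |f (a ^ (1 / q - 1) • ∑ l ∈ A, τ l • x l)| ≤ a ^ (1/q - 1) * ∑ l ∈ A, |f (x l)| := by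
      rw [map_smul, smul_eq_mul, abs_mul, abs_of_nonneg (by positivity), map_sum]
      gcongr
      refine (Finset.abs_sum_le_sum_abs _ _).trans (Finset.sum_le_sum fun l hl => ?_)
      rw [map_smul, smul_eq_mul, abs_mul]
      exact mul_le_of_le_one_left (abs_nonneg _) (hτ l hl)
    calc _ ≤ (a ^ (1/q - 1) * ∑ l ∈ A, |f (x l)|) ^ q := by gcongr
      _ = (a ^ (1/q - 1)) ^ q * (∑ l ∈ A, |f (x l)|) ^ q := by
        rw [Real.mul_rpow (by positivity) (by positivity)]
      _ ≤ (a ^ (1/q - 1)) ^ q * (a ^ (q - 1) * ∑ l ∈ A, |f (x l)| ^ q) := by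
        gcongr
        exact Real.rpow_sum_le_const_mul_sum_rpow A (fun l => f (x l)) hq
      _ = ∑ l ∈ A, |f (x l)| ^ q := by
        rw [← mul_assoc, ← Real.rpow_mul ha0.le, ← Real.rpow_add ha0]
        have : (1 / q - 1) * q + (q - 1) = 0 := by field_simp; ring
        rw [this, Real.rpow_zero, one_mul]
  · have h1 : s * (a ^ (1/q) * t) ≤ ‖T (a ^ (1 / q - 1) • ∑ l ∈ A, τ l • x l)‖ := by
      have h2 : φ (T (a ^ (1 / q - 1) • ∑ l ∈ A, τ l • x l)) ≤ ‖T (a ^ (1 / q - 1) • ∑ l ∈ A, τ l • x l)‖ := by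
        refine (le_abs_self _).trans ((φ.le_opNorm _).trans ?_)
        exact mul_le_of_le_one_left (norm_nonneg _) hφ
      refine le_trans ?_ h2
      rw [map_smul, map_smul, map_sum, map_sum, smul_eq_mul]
      have h3 : a * (s * t) ≤ ∑ l ∈ A, φ (T (τ l • x l)) := by
        have : a * (s * t) = ∑ l ∈ A, s * t := by simp [ha]
        rw [this]
        apply Finset.sum_le_sum
        intro l hl
        have hl2 := (Finset.mem_filter.1 hl).2
        rw [map_smul, map_smul, smul_eq_mul]
        have : τ l * φ (T (x l)) = s * (|φ (T (x l))| / ‖T (x l)‖) := by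
          simp only [τ]
          rw [← sign_mul_self (φ (T (x l)))]; ring
        rw [this]
        gcongr
      calc s * (a ^ (1/q) * t) = a ^ (1/q - 1) * (a * (s * t)) := by
            rw [Real.rpow_sub ha0, Real.rpow_one]; field_simp
        _ ≤ _ := by gcongr
    calc s ^ p * a * K ^ (p / r) ≤ s ^ p * a * (a * t ^ r) ^ (p / r) := by gcongr
      _ = (s * (a ^ (1/q) * t)) ^ p := by
        have hr0 : 0 < r := by linarith
        rw [Real.mul_rpow hs.le (by positivity), Real.mul_rpow (by positivity) ht0.le,
          Real.mul_rpow ha0.le (by positivity), ← Real.rpow_mul ha0.le, ← Real.rpow_mul ht0.le]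
        have e1 : r * (p / r) = p := by field_simp
        have e2 : 1 / q * p = 1 + p / r := by rw [hpqr]; field_simp
        rw [e1, e2, Real.rpow_add ha0, Real.rpow_one]; ring
      _ ≤ _ := by gcongr

lemma greedy {X Y : Type*} [NormedAddCommGroup X] [NormedSpace ℝ X]
    [NormedAddCommGroup Y] [NormedSpace ℝ Y] (T : X →L[ℝ] Y) (n : ℕ) (hn : 0 < n)
    (hfin : FiniteDimensional ℝ (LinearMap.range (T : X →ₗ[ℝ] Y)))
    (hrank : Module.finrank ℝ (LinearMap.range (T : X →ₗ[ℝ] Y)) ≤ n)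
    (p q r : ℝ) (hr1 : 1 ≤ r) (hr2 : r < 2) (hq : 1 ≤ q) (hp : 0 < p) (hpqr : 1 / q = 1 / p + 1 / r)
    {ι : Type*} (x : ι → X) (s : ℝ) (hs : 0 < s)
    (B : ℝ) (hB : 0 < B) (K : ℝ) (hK : K = (1 - (2:ℝ) ^ (r - 2)) / 8 * B) (j : ℕ) :
    ∀ (I : Finset ι), (∀ k ∈ I, s ≤ ‖T (x k)‖) →
    ∃ z : Fin j → X, (∀ f : X →L[ℝ] ℝ, ∑ i, |f (z i)| ^ q ≤ ∑ l ∈ I, |f (x l)| ^ q) ∧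
      s ^ p * K ^ (p / r) * min (I.card - B * n) (j * K) ≤ ∑ i, ‖T (z i)‖ ^ p := by
  classical
  have hρ1 : (2:ℝ) ^ (r - 2) < 1 := Real.rpow_lt_one_of_one_lt_of_neg (by norm_num) (by linarith)
  have hK0 : 0 < K := by
    have : 0 < 1 - (2:ℝ) ^ (r - 2) := by linarith
    rw [hK]; positivity
  set D := s ^ p * K ^ (p / r) with hD
  have hD0 : 0 < D := by positivity
  induction j with
  | zero =>
    intro I hI
    refine ⟨fun _ => 0, fun f => ?_, ?_⟩
    · simp; positivity
    · simp only [Finset.univ_eq_empty, Finset.sum_empty]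
      exact mul_nonpos_of_nonneg_of_nonpos hD0.le ((min_le_right _ _).trans (by simp))
  | succ j ih =>
    intro I hI
    have hq0 : q ≠ 0 := by linarith
    by_cases hc : (I.card : ℝ) - B * n ≤ 0
    · refine ⟨fun _ => 0, fun f => ?_, ?_⟩
      · simp [Real.zero_rpow hq0]; positivity
      · simp only [map_zero, norm_zero, Real.zero_rpow hp.ne', Finset.sum_const_zero]
        exact mul_nonpos_of_nonneg_of_nonpos hD0.le ((min_le_left _ _).trans hc)
    push Not at hc
    have hne : I.Nonempty := by
      rw [Finset.nonempty_iff_ne_empty]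
      rintro rfl
      have : 0 < B * n := by positivity
      simp at hc; linarith
    obtain ⟨A, hAI, z, hA1, hA2, hA3⟩ := step T n hfin hrank p q r hr1 hr2 hq hp hpqr I x s hs hI B hB
      (by linarith) hne
    rw [← hK] at hA1 hA3
    obtain ⟨z', h1, h2⟩ := ih (I \ A) (fun k hk => hI k (Finset.mem_sdiff.1 hk).1)
    refine ⟨Fin.cons z z', fun f => ?_, ?_⟩
    · rw [Fin.sum_univ_succ]
      simp only [Fin.cons_zero, Fin.cons_succ]
      rw [← Finset.sum_sdiff hAI, add_comm]
      exact add_le_add (h1 f) (hA2 f)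
    · rw [Fin.sum_univ_succ]
      simp only [Fin.cons_zero, Fin.cons_succ]
      have hcard : ((I \ A).card : ℝ) = I.card - A.card := by
        rw [Finset.card_sdiff_of_subset hAI, Nat.cast_sub (Finset.card_le_card hAI)]
      rw [hcard] at h2
      have h3 : min ((I.card : ℝ) - B * n) ((j + 1 : ℕ) * K) ≤
          A.card + min ((I.card : ℝ) - A.card - B * n) (j * K) := by
        rw [← min_add_add_left]
        apply min_le_min
        · linarith
        · push_cast; linarith
      have h4 := mul_le_mul_of_nonneg_left h3 hD0.le
      have h5 : s ^ p * A.card * K ^ (p / r) = D * A.card := by rw [hD]; ring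
      rw [mul_add, ← h5] at h4
      linarith

/-- A lower bound for the least norm in a large family. -/
lemma min_bound {X Y : Type*} [NormedAddCommGroup X] [NormedSpace ℝ X]
    [NormedAddCommGroup Y] [NormedSpace ℝ Y] (T : X →L[ℝ] Y) (n : ℕ) (hn : 0 < n)
    (hfin : FiniteDimensional ℝ (LinearMap.range (T : X →ₗ[ℝ] Y)))
    (hrank : Module.finrank ℝ (LinearMap.range (T : X →ₗ[ℝ] Y)) ≤ n)
    (p q r : ℝ) (hr1 : 1 ≤ r) (hr2 : r < 2) (hq : 1 ≤ q) (hp : 2 ≤ p) (hpqr : 1 / q = 1 / p + 1 / r)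
    (P : ℝ) (hP : ∀ z : Fin n → X, (∀ f : X →L[ℝ] ℝ, ‖f‖ ≤ 1 → ∑ i, |f (z i)| ^ q ≤ 1) →
      ∑ i, ‖T (z i)‖ ^ p ≤ P)
    (d : ℝ) (hd : d = (1 - (2:ℝ) ^ (r - 2)) / 16)
    {ι : Type*} (x : ι → X) (I : Finset ι) (hI : n ≤ I.card)
    (hx : ∀ f : X →L[ℝ] ℝ, ‖f‖ ≤ 1 → ∑ l ∈ I, |f (x l)| ^ q ≤ 1)
    (s : ℝ) (hs : 0 < s) (hxs : ∀ k ∈ I, s ≤ ‖T (x k)‖) :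
    s ^ p * I.card ^ 2 ≤ P * (d⁻¹) ^ p * n := by
  have hρ1 : (2:ℝ) ^ (r - 2) < 1 := Real.rpow_lt_one_of_one_lt_of_neg (by norm_num) (by linarith)
  have hρ0 : 0 < (2:ℝ) ^ (r - 2) := by positivity
  have hd0 : 0 < d := by rw [hd]; linarith
  have hd1 : d ≤ 1 / 16 := by rw [hd]; linarith
  have hn' : (0:ℝ) < n := by exact_mod_cast hn
  have hm : (n:ℝ) ≤ I.card := by exact_mod_cast hI
  set m : ℝ := (I.card : ℝ) with hmdef
  have hm0 : 0 < m := by linarith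
  obtain ⟨z, hz1, hz2⟩ := greedy T n hn hfin hrank p q r hr1 hr2 hq (by linarith) hpqr x s hs
    (m / (2 * n)) (by positivity) (d * m / n) (by rw [hd]; field_simp; ring) n I hxs
  have h1 := hz2.trans (hP z fun f hf => (hz1 f).trans (hx f hf))
  have e1 : min (m - m / (2 * n) * n) (n * (d * m / n)) = d * m := by
    have a1 : m - m / (2 * n) * n = m / 2 := by field_simp; ring
    have a2 : n * (d * m / n) = d * m := by field_simp
    rw [a1, a2]
    apply min_eq_right
    nlinarith
  rw [← hmdef, e1] at h1
  have hr0 : 0 < r := by linarith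
  have e2 : d ^ (p / r) * (m / n) ≤ (d * m / n) ^ (p / r) := by
    rw [mul_div_assoc, Real.mul_rpow hd0.le (by positivity)]
    gcongr
    apply Real.self_le_rpow_of_one_le
    · rwa [le_div_iff₀ hn', one_mul]
    · rw [le_div_iff₀ hr0]; linarith
  have e3 : d ^ p ≤ d ^ (p / r) * d := by
    have : d ^ (p / r) * d = d ^ (p / q) := by
      have : p / q = p / r + 1 := by rw [div_eq_mul_one_div, hpqr]; field_simp; ring
      rw [this, Real.rpow_add hd0, Real.rpow_one]
    rw [this]
    apply Real.rpow_le_rpow_of_exponent_ge hd0 (by linarith)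
    exact div_le_self (by linarith) hq
  have e4 : s ^ p * (d ^ p * (m ^ 2 / n)) ≤ P := by
    refine le_trans ?_ h1
    calc s ^ p * (d ^ p * (m ^ 2 / n)) ≤ s ^ p * ((d ^ (p / r) * d) * (m ^ 2 / n)) := by gcongr
      _ = s ^ p * (d ^ (p / r) * (m / n)) * (d * m) := by ring
      _ ≤ _ := by gcongr
  rw [Real.inv_rpow hd0.le]
  have hdp : 0 < d ^ p := by positivity
  have e5 : s ^ p * (d ^ p * (m ^ 2 / n)) = s ^ p * m ^ 2 * d ^ p / n := by ring
  rw [e5, div_le_iff₀ hn'] at e4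
  rw [← div_eq_mul_inv, div_mul_eq_mul_div, le_div_iff₀ hdp]
  exact e4

lemma small_card {X Y : Type*} [NormedAddCommGroup X] [NormedSpace ℝ X]
    [NormedAddCommGroup Y] [NormedSpace ℝ Y] (T : X →L[ℝ] Y) (n : ℕ)
    (p q : ℝ) (hq : 0 < q) (hp : 0 < p)
    (P : ℝ) (hP : ∀ z : Fin n → X, (∀ f : X →L[ℝ] ℝ, ‖f‖ ≤ 1 → ∑ i, |f (z i)| ^ q ≤ 1) →
      ∑ i, ‖T (z i)‖ ^ p ≤ P)
    {ι : Type*} (x : ι → X) (I : Finset ι) (hI : I.card ≤ n)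
    (hx : ∀ f : X →L[ℝ] ℝ, ‖f‖ ≤ 1 → ∑ l ∈ I, |f (x l)| ^ q ≤ 1) :
    ∑ l ∈ I, ‖T (x l)‖ ^ p ≤ P := by
  classical
  let e := I.equivFin
  let z : Fin n → X := fun i => if h : (i : ℕ) < I.card then x (e.symm ⟨i, h⟩) else 0
  have key : ∀ F : X → ℝ, F 0 = 0 → ∑ i, F (z i) = ∑ l ∈ I, F (x l) := by
    intro F hF
    rw [← Finset.sum_coe_sort I, ← e.symm.sum_comp (fun l : I => F (x l))]
    symm
    apply Finset.sum_of_injOn (Fin.castLE hI)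
    · exact (Fin.castLE_injective hI).injOn
    · intro _ _; simp
    · intro i _ hi
      have : ¬ (i : ℕ) < I.card := fun h => hi ⟨⟨i, h⟩, by simp, rfl⟩
      simp [z, this, hF]
    · intro i _
      simp [z]
  have h := hP z fun f hf => by
    rw [key (fun v => |f v| ^ q) (by simp [Real.zero_rpow hq.ne'])]
    exact hx f hf
  rwa [key (fun v => ‖T v‖ ^ p) (by simp [Real.zero_rpow hp.ne'])] at h

lemma real_main {X Y : Type*} [NormedAddCommGroup X] [NormedSpace ℝ X]
    [NormedAddCommGroup Y] [NormedSpace ℝ Y] (T : X →L[ℝ] Y) (n : ℕ) (hn : 0 < n)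
    (hfin : FiniteDimensional ℝ (LinearMap.range (T : X →ₗ[ℝ] Y)))
    (hrank : Module.finrank ℝ (LinearMap.range (T : X →ₗ[ℝ] Y)) ≤ n)
    (p q r : ℝ) (hr1 : 1 ≤ r) (hr2 : r < 2) (hq : 1 ≤ q) (hp : 2 ≤ p) (hpqr : 1 / q = 1 / p + 1 / r)
    (P : ℝ) (hP0 : 0 ≤ P)
    (hP : ∀ z : Fin n → X, (∀ f : X →L[ℝ] ℝ, ‖f‖ ≤ 1 → ∑ i, |f (z i)| ^ q ≤ 1) →
      ∑ i, ‖T (z i)‖ ^ p ≤ P)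
    (d : ℝ) (hd : d = (1 - (2:ℝ) ^ (r - 2)) / 16)
    {ι : Type*} (x : ι → X) (I : Finset ι)
    (hx : ∀ f : X →L[ℝ] ℝ, ‖f‖ ≤ 1 → ∑ l ∈ I, |f (x l)| ^ q ≤ 1) :
    ∑ l ∈ I, ‖T (x l)‖ ^ p ≤ (2 * d⁻¹) ^ p * P := by
  classical
  have hρ1 : (2:ℝ) ^ (r - 2) < 1 := Real.rpow_lt_one_of_one_lt_of_neg (by norm_num) (by linarith)
  have hρ0 : 0 < (2:ℝ) ^ (r - 2) := by positivity
  have hd0 : 0 < d := by rw [hd]; linarith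
  have hd1 : d ≤ 1 / 16 := by rw [hd]; linarith
  have hn' : (0:ℝ) < n := by exact_mod_cast hn
  set E := (d⁻¹) ^ p with hE
  have hE1 : 1 ≤ E := by
    apply Real.one_le_rpow _ (by linarith)
    rw [one_le_inv₀ hd0]; linarith
  have claim : ∀ N : ℕ, ∀ J : Finset ι, J.card = n + N → J ⊆ I →
      ∑ l ∈ J, ‖T (x l)‖ ^ p ≤ P * (1 + E * (1 - n / (n + N))) := by
    intro N
    induction N with
    | zero =>
      intro J hJ hJI
      have := small_card T n p q (by linarith) (by linarith) P hP x J (by omega) (fun f hf =>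
        (Finset.sum_le_sum_of_subset_of_nonneg hJI (fun _ _ _ => by positivity)).trans (hx f hf))
      have e : (n:ℝ) / (n + (0:ℕ)) = 1 := by simp [hn'.ne']
      rw [e]; simpa using this
    | succ N ih =>
      intro J hJ hJI
      have hJne : J.Nonempty := Finset.card_pos.1 (by omega)
      obtain ⟨k, hk, hmin⟩ := Finset.exists_min_image J (fun l => ‖T (x l)‖) hJne
      have h1 := ih (J.erase k) (by rw [Finset.card_erase_of_mem hk]; omega)
        ((Finset.erase_subset _ _).trans hJI)
      rw [← Finset.add_sum_erase J _ hk]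
      have h2 : ‖T (x k)‖ ^ p * (J.card:ℝ) ^ 2 ≤ P * E * n := by
        rcases eq_or_lt_of_le (norm_nonneg (T (x k))) with h0 | h0
        · rw [← h0, Real.zero_rpow (by linarith)]; simp only [zero_mul]; positivity
        · exact min_bound T n hn hfin hrank p q r hr1 hr2 hq hp hpqr P hP d hd x J (by omega)
            (fun f hf => (Finset.sum_le_sum_of_subset_of_nonneg hJI
              (fun _ _ _ => by positivity)).trans (hx f hf)) _ h0 hmin
      rw [hJ] at h2
      push_cast at h2 ⊢
      have hN : (0:ℝ) < n + N := by positivity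
      set u : ℝ := n + N with hu
      have e1 : (n:ℝ) + (N + 1) = u + 1 := by rw [hu]; ring
      rw [e1] at h2 ⊢
      have h3 : ‖T (x k)‖ ^ p ≤ P * E * (n / (u + 1) ^ 2) := by
        rw [← mul_div_assoc, le_div_iff₀ (by positivity)]; exact h2
      have h4 : (n:ℝ) / (u + 1) ^ 2 ≤ n / u - n / (u + 1) := by
        have : (n:ℝ) / u - n / (u + 1) = n / (u * (u + 1)) := by field_simp; ring
        rw [this]
        gcongr
        nlinarith
      have h5 := mul_le_mul_of_nonneg_left h4 (by positivity : 0 ≤ P * E)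
      nlinarith
  have h2E : P * (1 + E) ≤ (2 * d⁻¹) ^ p * P := by
    rw [Real.mul_rpow (by norm_num) (by positivity), ← hE]
    have : (2:ℝ) ≤ 2 ^ p := Real.self_le_rpow_of_one_le (by norm_num) (by linarith)
    nlinarith [mul_nonneg hP0 (by linarith : 0 ≤ E)]
  refine le_trans ?_ h2E
  rcases le_or_gt I.card n with hc | hc
  · refine (small_card T n p q (by linarith) (by linarith) P hP x I hc hx).trans ?_
    nlinarith
  · obtain ⟨N, hN⟩ := Nat.exists_eq_add_of_le hc.le
    refine (claim N I hN subset_rfl).trans ?_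
    gcongr
    apply mul_le_of_le_one_right (by linarith)
    have : (0:ℝ) ≤ n / (n + N) := by positivity
    linarith

lemma eSum_le_iff {ι : Type*} [Fintype ι] (p : ℝ) (hp : 0 < p) (pe : ℝ≥0∞) (hpe : pe ≠ ∞)
    (hpp : pe.toReal = p) (g : ι → ℝ) (hg : ∀ i, 0 ≤ g i) (M : ℝ) (hM : 0 ≤ M) :
    eSum pe (fun k => ENNReal.ofReal (g k)) ≤ ENNReal.ofReal M ↔ ∑ k, g k ^ p ≤ M ^ p := by
  rw [eSum, if_neg hpe, hpp, one_div, ENNReal.rpow_inv_le_iff hp,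
    ENNReal.ofReal_rpow_of_nonneg hM hp.le]
  have : ∑ i, ENNReal.ofReal (g i) ^ p = ENNReal.ofReal (∑ i, g i ^ p) := by
    rw [ENNReal.ofReal_sum_of_nonneg (fun i _ => Real.rpow_nonneg (hg i) p)]
    exact Finset.sum_congr rfl fun i _ => ENNReal.ofReal_rpow_of_nonneg (hg i) hp.le
  rw [this, ENNReal.ofReal_le_ofReal_iff (Real.rpow_nonneg hM p)]

lemma weakLq_le_one_iff {X : Type*} [NormedAddCommGroup X] [NormedSpace ℝ X] {n : ℕ}
    (q : ℝ) (hq : 0 < q) (qe : ℝ≥0∞) (hqe : qe ≠ ∞) (hqq : qe.toReal = q) (x : Fin n → X) :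
    weakLq qe x ≤ 1 ↔ ∀ f : X →L[ℝ] ℝ, ‖f‖ ≤ 1 → ∑ k, |f (x k)| ^ q ≤ 1 := by
  have h : ∀ f : X →L[ℝ] ℝ, (eSum qe fun k => ENNReal.ofReal |f (x k)|) ≤ 1 ↔
      ∑ k, |f (x k)| ^ q ≤ 1 := by
    intro f
    have := eSum_le_iff q hq qe hqe hqq (fun k => |f (x k)|) (fun _ => abs_nonneg _) 1 zero_le_one
    simpa using this
  rw [weakLq, iSup_le_iff]
  constructor
  · intro H f hf
    exact (h f).1 (H ⟨f, hf⟩)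
  · intro H f
    exact (h f.1).2 (H f.1 f.2)

lemma case_top {X Y : Type*} [NormedAddCommGroup X] [NormedSpace ℝ X]
    [NormedAddCommGroup Y] [NormedSpace ℝ Y] (T : X →L[ℝ] Y) (n : ℕ) (hn : 0 < n)
    (q : ℝ) (hq : 0 < q) (qe : ℝ≥0∞) (hqe : qe ≠ ∞) (hqq : qe.toReal = q) :
    piPQ ∞ qe T ≤ piN ∞ qe n T := by
  refine iSup_le fun N => iSup_le fun x => ?_
  obtain ⟨x, hx⟩ := x
  rw [weakLq_le_one_iff q hq qe hqe hqq] at hx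
  rw [eSum, if_pos rfl]
  refine iSup_le fun k => ?_
  let z : Fin n → X := fun i => if i = ⟨0, hn⟩ then x k else 0
  have hz : weakLq qe z ≤ 1 := by
    rw [weakLq_le_one_iff q hq qe hqe hqq]
    intro f hf
    rw [Finset.sum_eq_single (⟨0, hn⟩ : Fin n)]
    · simp only [z, if_true]
      exact (Finset.single_le_sum (f := fun k => |f (x k)| ^ q) (fun _ _ => by positivity)
        (Finset.mem_univ k)).trans (hx f hf)
    · intro i _ hi
      simp [z, hi, Real.zero_rpow hq.ne']
    · simp
  have h := le_iSup (fun x : {x : Fin n → X // weakLq qe x ≤ 1} =>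
    eSum ∞ fun k => ENNReal.ofReal ‖T (x.1 k)‖) ⟨z, hz⟩
  refine le_trans ?_ h
  simp only [eSum, if_true]
  refine le_trans ?_ (le_iSup (fun i => ENNReal.ofReal ‖T (z i)‖) ⟨0, hn⟩)
  simp [z]

lemma case_zero {X Y : Type*} [NormedAddCommGroup X] [NormedSpace ℝ X]
    [NormedAddCommGroup Y] [NormedSpace ℝ Y] (pe qe : ℝ≥0∞) (hp : pe ≠ 0) :
    piPQ pe qe (0 : X →L[ℝ] Y) = 0 := by
  rw [← le_zero_iff]
  refine iSup_le fun N => iSup_le fun x => ?_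
  by_cases h : pe = ∞
  · simp [eSum, h]
  · have : 0 < pe.toReal := ENNReal.toReal_pos hp h
    simp [eSum, h, this]

lemma case_fin {X Y : Type*} [NormedAddCommGroup X] [NormedSpace ℝ X]
    [NormedAddCommGroup Y] [NormedSpace ℝ Y] (T : X →L[ℝ] Y) (n : ℕ) (hn : 0 < n)
    (hT : RankLE T n)
    (p q r : ℝ) (hr1 : 1 ≤ r) (hr2 : r < 2) (hq : 1 ≤ q) (hp : 2 ≤ p)
    (hpqr : 1 / q = 1 / p + 1 / r) (pe qe : ℝ≥0∞) (hpe : pe ≠ ∞) (hqe : qe ≠ ∞)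
    (hpp : pe.toReal = p) (hqq : qe.toReal = q)
    (d : ℝ) (hd : d = (1 - (2:ℝ) ^ (r - 2)) / 16) (hd0 : 0 < d) :
    piPQ pe qe T ≤ ENNReal.ofReal (2 * d⁻¹) * piN pe qe n T := by
  by_cases hM : piN pe qe n T = ∞
  · rw [hM, ENNReal.mul_top]
    · exact le_top
    · have : 0 < 2 * d⁻¹ := by positivity
      simpa using this
  set M := (piN pe qe n T).toReal with hMd
  have hM' : piN pe qe n T = ENNReal.ofReal M := (ENNReal.ofReal_toReal hM).symm
  have hM0 : 0 ≤ M := ENNReal.toReal_nonneg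
  rw [hM', ← ENNReal.ofReal_mul (by positivity)]
  refine iSup_le fun N => iSup_le fun x => ?_
  obtain ⟨x, hx⟩ := x
  rw [weakLq_le_one_iff q (by linarith) qe hqe hqq] at hx
  rw [eSum_le_iff p (by linarith) pe hpe hpp (fun k => ‖T (x k)‖) (fun _ => norm_nonneg _) _
    (by positivity), Real.mul_rpow (by positivity) hM0]
  refine real_main T n hn hT.1 hT.2 p q r hr1 hr2 hq hp hpqr (M ^ p) (by positivity) ?_ d hd x
    Finset.univ hx
  intro z hz
  rw [← eSum_le_iff p (by linarith) pe hpe hpp (fun k => ‖T (z k)‖) (fun _ => norm_nonneg _) _ hM0,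
    ← hM']
  exact le_iSup (fun x : {x : Fin n → X // weakLq qe x ≤ 1} =>
    eSum pe fun k => ENNReal.ofReal ‖T (x.1 k)‖)
    ⟨z, (weakLq_le_one_iff q (by linarith) qe hqe hqq z).2 hz⟩

/-- for `1 ≤ q < p ≤ ∞` with `1/q = 1/p + 1/r` and `1 ≤ r < 2`,
there is a constant `c_r` such that `π_{p,q}(T) ≤ c_r · π_{p,q}^n(T)` for every
operator `T` between real Banach spaces of rank at most `n`. -/
theorem statement0 (r : ℝ≥0∞) (hr1 : 1 ≤ r) (hr2 : r < 2) :
    ∃ c : ℝ≥0, 0 < c ∧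
      ∀ (q p : ℝ≥0∞), 1 ≤ q → q < p → 1 / q = 1 / p + 1 / r →
        ∀ (X Y : Type*) [NormedAddCommGroup X] [NormedSpace ℝ X] [CompleteSpace X]
          [NormedAddCommGroup Y] [NormedSpace ℝ Y] [CompleteSpace Y]
          (n : ℕ) (T : X →L[ℝ] Y), RankLE T n →
          piPQ p q T ≤ (c : ℝ≥0∞) * piN p q n T := by
  have hrt : r ≠ ∞ := (hr2.trans (by simp)).ne
  have hR1 : 1 ≤ r.toReal := by
    simpa using ENNReal.toReal_mono hrt hr1
  have hR2 : r.toReal < 2 := by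
    simpa using (ENNReal.toReal_lt_toReal hrt (by simp)).2 hr2
  have hρ1 : (2:ℝ) ^ (r.toReal - 2) < 1 :=
    Real.rpow_lt_one_of_one_lt_of_neg (by norm_num) (by linarith)
  have hρ0 : 0 < (2:ℝ) ^ (r.toReal - 2) := by positivity
  obtain ⟨d, hd⟩ : ∃ d : ℝ, d = (1 - (2:ℝ) ^ (r.toReal - 2)) / 16 := ⟨_, rfl⟩
  have hd0 : 0 < d := by rw [hd]; linarith
  have hd1 : d ≤ 1 / 16 := by rw [hd]; linarith
  refine ⟨Real.toNNReal (2 * d⁻¹), by simpa using hd0, ?_⟩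
  intro q p hq hqp hpqr X Y _ _ _ _ _ _ n T hT
  change _ ≤ ENNReal.ofReal (2 * d⁻¹) * _
  have hqt : q ≠ ∞ := (hqp.trans_le le_top).ne
  have hQ1 : 1 ≤ q.toReal := by simpa using ENNReal.toReal_mono hqt hq
  have hp0 : p ≠ 0 := (lt_of_le_of_lt zero_le hqp).ne'
  rcases Nat.eq_zero_or_pos n with hn | hn
  · subst hn
    have hT0 : T = 0 := by
      have := hT.1
      have h0 := Submodule.finrank_eq_zero.1 (Nat.le_zero.1 hT.2)
      rw [LinearMap.range_eq_bot] at h0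
      ext v
      exact congrArg (fun L : X →ₗ[ℝ] Y => L v) h0
    rw [hT0, case_zero p q hp0]
    exact zero_le
  by_cases hpt : p = ∞
  · subst hpt
    refine (case_top T n hn q.toReal (by linarith) q hqt rfl).trans ?_
    apply le_mul_of_one_le_left (zero_le)
    rw [ENNReal.one_le_ofReal]
    have : 1 ≤ d⁻¹ := by rw [one_le_inv₀ hd0]; linarith
    linarith
  · have hPpos : 0 < p.toReal := ENNReal.toReal_pos hp0 hpt
    have hreal : 1 / q.toReal = 1 / p.toReal + 1 / r.toReal := by
      have := congrArg ENNReal.toReal hpqr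
      rw [ENNReal.toReal_add (by simpa using hp0) (by simpa using (lt_of_lt_of_le one_pos hr1).ne')] at this
      simpa using this
    have hP2 : 2 ≤ p.toReal := by
      have h1 : 1 / q.toReal ≤ 1 := by rw [div_le_one (by linarith)]; exact hQ1
      have h2 : 1 / 2 ≤ 1 / r.toReal := one_div_le_one_div_of_le (by linarith) hR2.le
      have h3 : 1 / p.toReal ≤ 1 / 2 := by linarith
      exact le_of_one_div_le_one_div hPpos h3
    exact case_fin T n hn hT p.toReal q.toReal r.toReal hR1 hR2 hQ1 hP2 hreal p q hpt hqt rfl rfl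
      d hd hd0

end
end

section
/- Let 1 ≤ q < p ≤ ∞ and define r by 1/q = 1/p + 1/r, and suppose 2 < r < ∞. Then there is a constant c_r (depending only on r) such that for every bounded linear operator T : X → Y between real Banach spaces whose rank is at most n one has π_{p,q}(T) ≤ c_r · π_{p,q}^{m}(T), where m = ⌊n^{r/2}⌋. -/
open scoped ENNReal NNReal BigOperators

noncomputable section

lemma exists_coeff {ι Y : Type*} [DecidableEq ι] [NormedAddCommGroup Y] [NormedSpace ℝ Y]
    (V : Submodule ℝ Y) [FiniteDimensional ℝ V] (n : ℕ) (hn : Module.finrank ℝ V ≤ n)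
    (R : Finset ι) (hR : R.Nonempty) (y : ι → Y) (hy : ∀ l, y l ∈ V) :
    ∃ k ∈ R, ∃ f : ι → ℝ, ∑ l ∈ R, f l ^ 2 ≤ n / R.card ∧ y k = ∑ l ∈ R, f l • y l := by
  classical
  let A : EuclideanSpace ℝ R →ₗ[ℝ] Y :=
    { toFun := fun v => ∑ l : R, v l • y l
      map_add' := by intro u v; simp [add_smul, Finset.sum_add_distrib]
      map_smul' := by intro c v; simp [mul_smul, Finset.smul_sum] }
  have hA : ∀ v, A v = ∑ l : R, v l • y l := fun v => rfl
  let P := (LinearMap.ker A)ᗮ.starProjection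
  have hAP : ∀ v, A (P v) = A v := by
    intro v
    have h1 : v - P v ∈ LinearMap.ker A := by
      have := (LinearMap.ker A)ᗮ.sub_starProjection_mem_orthogonal v
      rwa [Submodule.orthogonal_orthogonal] at this
    have := LinearMap.mem_ker.1 h1
    rw [map_sub, sub_eq_zero] at this
    exact this.symm
  have hrange : Module.finrank ℝ (LinearMap.range A) ≤ n := by
    refine le_trans (Submodule.finrank_mono ?_) hn
    rintro _ ⟨v, rfl⟩
    rw [hA]
    exact Submodule.sum_mem _ fun l _ => Submodule.smul_mem _ _ (hy l)
  have hdim : Module.finrank ℝ (LinearMap.ker A)ᗮ ≤ n := by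
    have h1 := (LinearMap.ker A).finrank_add_finrank_orthogonal
    have h2 := A.finrank_range_add_finrank_ker
    omega
  let e := EuclideanSpace.basisFun R ℝ
  have htr : ∑ k : R, ‖P (e k)‖ ^ 2 ≤ n := by
    have h1 : LinearMap.trace ℝ _ (P : EuclideanSpace ℝ R →ₗ[ℝ] EuclideanSpace ℝ R)
        = Module.finrank ℝ (LinearMap.ker A)ᗮ := by
      apply LinearMap.IsProj.trace
      exact ⟨fun x => Submodule.starProjection_apply_mem _ x, fun x hx => 
        Submodule.starProjection_eq_self_iff.2 hx⟩
    rw [LinearMap.trace_eq_sum_inner _ e] at h1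
    have h2 : ∑ k : R, ‖P (e k)‖ ^ 2 = (Module.finrank ℝ (LinearMap.ker A)ᗮ : ℝ) := by
      rw [← h1]
      refine Finset.sum_congr rfl fun k _ => ?_
      have := Submodule.re_inner_starProjection_eq_normSq (K := (LinearMap.ker A)ᗮ) (e k)
      simp only [RCLike.re_to_real] at this
      rw [real_inner_comm]
      exact this.symm
    rw [h2]; exact_mod_cast hdim
  have : Nonempty R := hR.to_subtype
  obtain ⟨k, -, hk⟩ : ∃ k ∈ (Finset.univ : Finset R), ‖P (e k)‖ ^ 2 ≤ n / R.card := by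
    apply Finset.exists_le_of_sum_le Finset.univ_nonempty
    have : (R.card : ℝ) ≠ 0 := by exact_mod_cast hR.card_pos.ne'
    simp
    rw [mul_div_cancel₀ _ this]
    exact htr
  refine ⟨k, k.2, fun l => if h : l ∈ R then P (e k) ⟨l, h⟩ else 0, ?_, ?_⟩
  · rw [← Finset.sum_coe_sort]
    rw [EuclideanSpace.norm_sq_eq] at hk
    simpa using hk
  · rw [← Finset.sum_coe_sort]
    have h1 := hAP (e k)
    rw [hA, hA] at h1
    simp only [Finset.coe_mem, dite_true, Subtype.coe_eta]
    rw [h1]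
    simp [e, EuclideanSpace.basisFun_apply, PiLp.single_apply]

lemma maximal_family {ι : Type*} [DecidableEq ι] (D : Finset ι) (P : Finset ι → Prop)
    (hP : ∀ B, P B → B.Nonempty) :
    ∃ F : Finset (Finset ι), (∀ B ∈ F, B ⊆ D ∧ P B) ∧
      (F : Set (Finset ι)).PairwiseDisjoint id ∧ ∀ B ⊆ D \ F.biUnion id, ¬ P B := by
  classical
  let C : Finset (Finset (Finset ι)) := D.powerset.powerset.filter
    (fun F => (∀ B ∈ F, B ⊆ D ∧ P B) ∧ (F : Set (Finset ι)).PairwiseDisjoint id)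
  obtain ⟨F, hF, hmax⟩ := C.exists_max_image Finset.card ⟨∅, by simp [C]⟩
  have hF' := (Finset.mem_filter.1 hF).2
  refine ⟨F, hF'.1, hF'.2, fun B hB hPB => ?_⟩
  have hBD : B ⊆ D := hB.trans Finset.sdiff_subset
  have hdisj : ∀ B' ∈ F, Disjoint B B' := by
    intro B' hB'
    refine Finset.disjoint_left.2 fun a ha ha' => ?_
    exact (Finset.mem_sdiff.1 (hB ha)).2 (Finset.mem_biUnion.2 ⟨B', hB', ha'⟩)
  have hnot : B ∉ F := by
    intro h
    have := hdisj B h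
    rw [disjoint_self] at this
    exact (hP B hPB).ne_empty this
  have hall : ∀ B' ∈ insert B F, B' ⊆ D ∧ P B' := by
    intro B' hB'
    rcases Finset.mem_insert.1 hB' with rfl | h
    · exact ⟨hBD, hPB⟩
    · exact hF'.1 _ h
  have hmem : insert B F ∈ C := by
    refine Finset.mem_filter.2 ⟨?_, hall, ?_⟩
    · refine Finset.mem_powerset.2 fun B' hB' => Finset.mem_powerset.2 (hall B' hB').1
    · rw [Finset.coe_insert]
      exact hF'.2.insert fun B' hB' _ => hdisj B' hB'
  have := hmax _ hmem
  rw [Finset.card_insert_of_notMem hnot] at this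
  omega

/-- bound of the summing type with at most `m` vectors -/
def Bd {X Y : Type*} [NormedAddCommGroup X] [NormedSpace ℝ X]
    [NormedAddCommGroup Y] [NormedSpace ℝ Y] (T : X →L[ℝ] Y) (p q K : ℝ) (m : ℕ) : Prop :=
  ∀ (M : ℕ), M ≤ m → ∀ (x : Fin M → X) (W : ℝ), 0 < W →
    (∀ f : X →L[ℝ] ℝ, ‖f‖ ≤ 1 → ∑ i, |f (x i)| ^ q ≤ W ^ q) →
    ∑ i, ‖T (x i)‖ ^ p ≤ (K * W) ^ p

section
variable {X Y : Type*} [NormedAddCommGroup X] [NormedSpace ℝ X]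
    [NormedAddCommGroup Y] [NormedSpace ℝ Y] {T : X →L[ℝ] Y} {p q K : ℝ} {m : ℕ}

lemma Bd.finset (h : Bd T p q K m) {α : Type*} (s : Finset α) (hs : s.card ≤ m)
    (x : α → X) (W : ℝ) (hW : 0 < W)
    (hx : ∀ f : X →L[ℝ] ℝ, ‖f‖ ≤ 1 → ∑ i ∈ s, |f (x i)| ^ q ≤ W ^ q) :
    ∑ i ∈ s, ‖T (x i)‖ ^ p ≤ (K * W) ^ p := by
  have key : ∀ φ : α → ℝ, ∑ i : Fin s.card, φ (s.equivFin.symm i) = ∑ i ∈ s, φ i := by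
    intro φ
    rw [← Finset.sum_coe_sort s]
    exact s.equivFin.symm.sum_comp (fun i : s => φ i)
  have := h s.card hs (fun i => x (s.equivFin.symm i)) W hW (by
    intro f hf
    rw [key (fun i => |f (x i)| ^ q)]
    exact hx f hf)
  rwa [key (fun i => ‖T (x i)‖ ^ p)] at this

lemma weak_block (hq : 1 ≤ q) {ι : Type*} [DecidableEq ι] (D : Finset ι) (x : ι → X)
    (hx : ∀ f : X →L[ℝ] ℝ, ‖f‖ ≤ 1 → ∑ i ∈ D, |f (x i)| ^ q ≤ 1)
    (F : Finset (Finset ι)) (hFD : ∀ B ∈ F, B ⊆ D)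
    (hF : (F : Set (Finset ι)).PairwiseDisjoint id) (b : ℝ) (hb : 0 < b)
    (hFb : ∀ B ∈ F, (B.card : ℝ) ≤ b) (g : Finset ι → ι → ℝ) (hg : ∀ B ∈ F, ∀ l ∈ B, |g B l| ≤ 1)
    (f : X →L[ℝ] ℝ) (hf : ‖f‖ ≤ 1) :
    ∑ B ∈ F, |f (∑ l ∈ B, g B l • x l)| ^ q ≤ (b ^ (1 - 1 / q)) ^ q := by
  have hbq : (b ^ (1 - 1 / q)) ^ q = b ^ (q - 1) := by
    rw [← Real.rpow_mul hb.le]; congr 1; field_simp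
  rw [hbq]
  have h1 : ∀ B ∈ F, |f (∑ l ∈ B, g B l • x l)| ^ q ≤ b ^ (q - 1) * ∑ l ∈ B, |f (x l)| ^ q := by
    intro B hB
    have h2 : |f (∑ l ∈ B, g B l • x l)| ≤ ∑ l ∈ B, |f (x l)| := by
      rw [map_sum]
      refine (Finset.abs_sum_le_sum_abs _ _).trans (Finset.sum_le_sum fun l hl => ?_)
      rw [map_smul, smul_eq_mul, abs_mul]
      exact mul_le_of_le_one_left (abs_nonneg _) (hg B hB l hl)
    calc |f (∑ l ∈ B, g B l • x l)| ^ q ≤ (∑ l ∈ B, |f (x l)|) ^ q := 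
          Real.rpow_le_rpow (abs_nonneg _) h2 (by linarith)
      _ ≤ (B.card : ℝ) ^ (q - 1) * ∑ l ∈ B, |f (x l)| ^ q := 
          Real.rpow_sum_le_const_mul_sum_rpow B _ hq
      _ ≤ _ := by
          refine mul_le_mul_of_nonneg_right ?_ (Finset.sum_nonneg fun l _ => by positivity)
          exact Real.rpow_le_rpow (by positivity) (hFb B hB) (by linarith)
  calc _ ≤ ∑ B ∈ F, b ^ (q - 1) * ∑ l ∈ B, |f (x l)| ^ q := Finset.sum_le_sum h1
    _ = b ^ (q - 1) * ∑ l ∈ F.biUnion id, |f (x l)| ^ q := by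
        rw [← Finset.mul_sum, Finset.sum_biUnion hF]; simp
    _ ≤ b ^ (q - 1) * 1 := by
        refine mul_le_mul_of_nonneg_left ?_ (by positivity)
        refine (Finset.sum_le_sum_of_subset_of_nonneg ?_ fun l _ _ => by positivity).trans (hx f hf)
        exact Finset.biUnion_subset.2 hFD
    _ = _ := mul_one _

lemma count_block (h : Bd T p q K m) (hp : 0 < p) (hq : 1 ≤ q) (hK : 0 < K)
    {ι : Type*} [DecidableEq ι] (D : Finset ι) (x : ι → X)
    (hx : ∀ f : X →L[ℝ] ℝ, ‖f‖ ≤ 1 → ∑ i ∈ D, |f (x i)| ^ q ≤ 1)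
    (F : Finset (Finset ι)) (hFD : ∀ B ∈ F, B ⊆ D)
    (hF : (F : Set (Finset ι)).PairwiseDisjoint id) (b : ℝ) (hb : 0 < b)
    (hFb : ∀ B ∈ F, (B.card : ℝ) ≤ b) (μ : ℝ) (hμ : 0 < μ) (hμm : μ < m)
    (hg : ∀ B ∈ F, ∃ g : ι → ℝ, (∀ l ∈ B, |g l| ≤ 1) ∧
      K * b ^ (1 - 1 / q) * μ ^ (- (1 / p)) < ‖∑ l ∈ B, g l • T (x l)‖) :
    (F.card : ℝ) ≤ μ := by
  by_contra hcon
  push Not at hcon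
  have h1 : ⌊μ⌋₊ + 1 ≤ F.card := (Nat.floor_lt hμ.le).2 hcon
  obtain ⟨G, hGF, hG⟩ := Finset.exists_subset_card_eq h1
  choose! g hg1 hg2 using hg
  have hGm : G.card ≤ m := by
    rw [hG]; exact (Nat.floor_lt hμ.le).2 hμm
  have := h.finset G hGm (fun B => ∑ l ∈ B, g B l • x l) (b ^ (1 - 1 / q)) (by positivity)
    (fun f hf => weak_block hq D x hx G (fun B hB => hFD B (hGF hB)) (hF.subset (by exact_mod_cast hGF))
      b hb (fun B hB => hFb B (hGF hB)) g (fun B hB => hg1 B (hGF hB)) f hf)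
  have h2 : (G.card : ℝ) * ((K * b ^ (1 - 1 / q)) ^ p * μ⁻¹) ≤ (K * b ^ (1 - 1 / q)) ^ p := by
    refine le_trans ?_ this
    rw [← nsmul_eq_mul]
    refine Finset.card_nsmul_le_sum _ _ _ fun B hB => ?_
    have h3 := (hg2 B (hGF hB)).le
    have h4 : (K * b ^ (1 - 1 / q)) ^ p * μ⁻¹ = (K * b ^ (1 - 1 / q) * μ ^ (- (1 / p))) ^ p := by
      rw [Real.mul_rpow (x := K * b ^ (1 - 1 / q)) (y := μ ^ (- (1 / p))) (by positivity)
        (by positivity), ← Real.rpow_mul hμ.le, ← Real.rpow_neg_one]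
      congr 2; field_simp
    rw [h4]
    refine Real.rpow_le_rpow (by positivity) ?_ hp.le
    rw [map_sum]
    simpa using h3
  have h5 : μ < G.card := by rw [hG]; push_cast; exact Nat.lt_floor_add_one μ
  have h6 : 0 < (K * b ^ (1 - 1 / q)) ^ p := by positivity
  have h7 : (G.card : ℝ) * μ⁻¹ ≤ 1 := by
    by_contra h8
    push Not at h8
    nlinarith
  rw [← div_eq_mul_inv, div_le_one hμ] at h7
  linarith


lemma level_numeric {p q r K n N S ρ : ℝ} (hp : 1 ≤ p) (hr : 2 < r)
    (hpq : 1 / q = 1 / p + 1 / r) (hK : 0 < K) (hn : 0 < n) (hN : 0 < N) (hS : 1 ≤ S)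
    (hρ : ρ = (2 : ℝ) ^ (-(1 / 2 - 1 / r))) (hρ1 : ρ ≤ 1) (i : ℕ) :
    (√(8 * n) / N * 2 ^ i) * (K * (N / 4 ^ i) ^ (1 - 1 / q) *
      (ρ ^ i / (64 * S) * 4 ^ i) ^ (-(1 / p))) ≤ (64 * S * √(8 * n) * K * N ^ (-(1 / q))) * ρ ^ i := by
  have hρ0 : 0 < ρ := by rw [hρ]; positivity
  have h2i : (2 : ℝ) ^ i = (2 : ℝ) ^ (i : ℝ) := (Real.rpow_natCast _ _).symm
  have h4i : (4 : ℝ) ^ i = (2 : ℝ) ^ (2 * (i : ℝ)) := by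
    rw [Real.rpow_mul (by norm_num), Real.rpow_natCast]; norm_num
  have hρi : ρ ^ i = (2 : ℝ) ^ (-(1 / 2 - 1 / r) * i) := by
    rw [hρ, Real.rpow_mul (by norm_num), Real.rpow_natCast]
  have hv0 : 0 < ρ ^ i / (64 * S) := by positivity
  have hv1 : ρ ^ i / (64 * S) ≤ 1 := by
    rw [div_le_one (by positivity)]
    have := pow_le_one₀ (n := i) hρ0.le hρ1
    linarith
  have e1 : (N / 4 ^ i) ^ (1 - 1 / q) = N ^ (1 - 1 / q) * (2 : ℝ) ^ (-(2 * (i : ℝ) * (1 - 1 / q))) := by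
    rw [Real.div_rpow hN.le (by positivity), h4i, ← Real.rpow_mul (by norm_num),
      Real.rpow_neg (by norm_num), div_eq_mul_inv]
  have e2 : (ρ ^ i / (64 * S) * 4 ^ i) ^ (-(1 / p)) ≤
      (64 * S) * (2 : ℝ) ^ ((1 / 2 - 1 / r) * i) * (2 : ℝ) ^ (-(2 * (i : ℝ) * (1 / p))) := by
    rw [Real.mul_rpow hv0.le (by positivity), h4i, ← Real.rpow_mul (by norm_num) (2 * (i : ℝ))]
    have : 2 * (i : ℝ) * -(1 / p) = -(2 * (i : ℝ) * (1 / p)) := by ring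
    rw [this]
    refine mul_le_mul_of_nonneg_right ?_ (by positivity)
    calc (ρ ^ i / (64 * S)) ^ (-(1 / p)) ≤ (ρ ^ i / (64 * S)) ^ (-1 : ℝ) := by
          apply Real.rpow_le_rpow_of_exponent_ge hv0 hv1
          have : 1 / p ≤ 1 := by rw [div_le_one (by linarith)]; exact hp
          linarith
      _ = _ := by
          rw [Real.rpow_neg_one, inv_div, hρi, div_eq_mul_inv, ← Real.rpow_neg (by norm_num)]
          congr 2; ring
  have e3 : N ^ (1 - 1 / q) = N * N ^ (-(1 / q)) := by
    rw [sub_eq_add_neg, Real.rpow_add hN, Real.rpow_one]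
  have e4 : (2 : ℝ) ^ (i : ℝ) * (2 : ℝ) ^ (-(2 * (i : ℝ) * (1 - 1 / q))) *
      (2 : ℝ) ^ ((1 / 2 - 1 / r) * i) * (2 : ℝ) ^ (-(2 * (i : ℝ) * (1 / p))) = ρ ^ i := by
    rw [hρi, ← Real.rpow_add (by norm_num), ← Real.rpow_add (by norm_num),
      ← Real.rpow_add (by norm_num)]
    congr 1
    rw [hpq]; ring
  calc _ ≤ (√(8 * n) / N * 2 ^ i) * (K * (N / 4 ^ i) ^ (1 - 1 / q) *
      ((64 * S) * (2 : ℝ) ^ ((1 / 2 - 1 / r) * i) * (2 : ℝ) ^ (-(2 * (i : ℝ) * (1 / p))))) := by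
        gcongr
    _ = (64 * S * √(8 * n) * K * N ^ (-(1 / q))) * ((2 : ℝ) ^ (i : ℝ) * (2 : ℝ) ^ (-(2 * (i : ℝ) * (1 - 1 / q))) *
      (2 : ℝ) ^ ((1 / 2 - 1 / r) * i) * (2 : ℝ) ^ (-(2 * (i : ℝ) * (1 / p)))) := by
        rw [e1, e3, h2i]; field_simp
    _ = _ := by rw [e4]

lemma geom_sum_bd {ρ : ℝ} (h0 : 0 ≤ ρ) (h1 : ρ < 1) (s : Finset ℕ) :
    ∑ i ∈ s, ρ ^ i ≤ 1 / (1 - ρ) := by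
  rw [one_div, ← tsum_geometric_of_lt_one h0 h1]
  exact (summable_geometric_of_lt_one h0 h1).sum_le_tsum _ (fun i _ => by positivity)

lemma flat_bound (h : Bd T p q K m) (hp : 1 ≤ p) (hq : 1 ≤ q) {r : ℝ} (hr : 2 < r)
    (hpq : 1 / q = 1 / p + 1 / r) (hK : 0 < K) (n : ℕ) (hn : 1 ≤ n) (hnm : n ≤ m)
    (V : Submodule ℝ Y) [FiniteDimensional ℝ V] (hV : Module.finrank ℝ V ≤ n)
    (hTV : ∀ x, T x ∈ V) {S ρ : ℝ} (hρ : ρ = (2 : ℝ) ^ (-(1 / 2 - 1 / r))) (hS : S = 1 / (1 - ρ))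
    {ι : Type*} [DecidableEq ι] (D : Finset ι) (hD : D.Nonempty) (x : ι → X)
    (hx : ∀ f : X →L[ℝ] ℝ, ‖f‖ ≤ 1 → ∑ i ∈ D, |f (x i)| ^ q ≤ 1)
    (t : ℝ) (ht : 0 < t) (hlow : ∀ k ∈ D, t < ‖T (x k)‖) (hup : ∀ k ∈ D, ‖T (x k)‖ ≤ 2 * t) :
    t ≤ 512 * S ^ 2 * √n * K * (D.card : ℝ) ^ (-(1 / q)) := by
  have hρ0 : 0 < ρ := by rw [hρ]; positivity
  have hρ1 : ρ < 1 := by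
    rw [hρ]
    apply Real.rpow_lt_one_of_one_lt_of_neg (by norm_num)
    have : 1 / r < 1 / 2 := one_div_lt_one_div_of_lt (by norm_num) hr
    linarith
  have hS1 : 1 ≤ S := by
    rw [hS, one_div]; exact (one_le_inv₀ (by linarith)).2 (by linarith)
  have hp0 : 0 < p := by linarith
  have hnR : (1 : ℝ) ≤ n := by exact_mod_cast hn
  set N : ℝ := (D.card : ℝ) with hNdef
  have hN1 : 1 ≤ N := by rw [hNdef]; exact_mod_cast hD.card_pos
  have hN : 0 < N := by linarith
  set b : ℕ → ℝ := fun i => N / 4 ^ i with hb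
  have hb0 : ∀ i, 0 < b i := fun i => by simp only [hb]; positivity
  set μ : ℕ → ℝ := fun i => ρ ^ i / (64 * S) * 4 ^ i with hμ
  have hμ0 : ∀ i, 0 < μ i := fun i => by simp only [hμ]; positivity
  set τ : ℕ → ℝ := fun i => K * b i ^ (1 - 1 / q) * μ i ^ (-(1 / p)) with hτ
  have hτ0 : ∀ i, 0 ≤ τ i := fun i => by
    have := hb0 i
    have := hμ0 i
    simp only [hτ]; positivity
  set θ : ℕ → ℝ := fun i => √(8 * n) / N * 2 ^ i with hθ
  have hs8 : 0 < √(8 * (n : ℝ)) := Real.sqrt_pos.2 (by positivity)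
  have hs8' : √(8 * (n : ℝ)) * √(8 * (n : ℝ)) = 8 * n := Real.mul_self_sqrt (by positivity)
  have hθ0 : ∀ i, 0 < θ i := fun i => by simp only [hθ]; positivity
  obtain ⟨j, hj1, hj2⟩ := exists_nat_pow_near (x := (8 * n : ℝ)) (y := 4) (by linarith) (by norm_num)
  set J := j + 1 with hJ
  have hJ32 : (4 : ℝ) ^ J ≤ 32 * n := by rw [hJ, pow_succ]; linarith
  -- the families
  have hfam : ∀ i, ∃ F : Finset (Finset ι), (∀ B ∈ F, B ⊆ D ∧ ((B.card : ℝ) ≤ b i ∧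
      ∃ g : ι → ℝ, (∀ l ∈ B, |g l| ≤ 1) ∧ τ i < ‖∑ l ∈ B, g l • T (x l)‖)) ∧
      (F : Set (Finset ι)).PairwiseDisjoint id ∧ ∀ B ⊆ D \ F.biUnion id, ¬ ((B.card : ℝ) ≤ b i ∧
      ∃ g : ι → ℝ, (∀ l ∈ B, |g l| ≤ 1) ∧ τ i < ‖∑ l ∈ B, g l • T (x l)‖) := by
    intro i
    refine maximal_family D _ ?_
    rintro B ⟨-, g, -, hB⟩
    rw [Finset.nonempty_iff_ne_empty]
    rintro rfl
    simp at hB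
    exact absurd hB (not_lt.2 (hτ0 i))
  choose F hF1 hF2 hF3 using hfam
  have hFcard : ∀ i ≤ J, ((F i).card : ℝ) ≤ μ i := by
    intro i hi
    refine count_block h hp0 hq hK D x hx (F i) (fun B hB => (hF1 i B hB).1) (hF2 i) (b i) (hb0 i)
      (fun B hB => (hF1 i B hB).2.1) (μ i) (hμ0 i) ?_ (fun B hB => (hF1 i B hB).2.2)
    have h1 : (4 : ℝ) ^ i ≤ 4 ^ J := pow_le_pow_right₀ (by norm_num) hi
    have h2 : ρ ^ i / (64 * S) ≤ 1 / 64 := by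
      rw [div_le_div_iff₀ (by positivity) (by norm_num)]
      have := pow_le_one₀ (n := i) hρ0.le hρ1.le
      linarith
    have h3 : μ i ≤ 1 / 64 * (32 * n) := by
      simp only [hμ]
      refine mul_le_mul h2 (h1.trans hJ32) (by positivity) (by norm_num)
    have h4 : (n : ℝ) ≤ m := by exact_mod_cast hnm
    linarith
  set U : Finset ι := (Finset.range (J + 1)).biUnion (fun i => (F i).biUnion id) with hU
  have hUcard : (U.card : ℝ) ≤ N / 64 := by
    have h1 : (U.card : ℝ) ≤ ∑ i ∈ Finset.range (J + 1), (((F i).biUnion id).card : ℝ) := by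
      exact_mod_cast Finset.card_biUnion_le
    have h2 : ∀ i ∈ Finset.range (J + 1), (((F i).biUnion id).card : ℝ) ≤ N / (64 * S) * ρ ^ i := by
      intro i hi
      have h3 : (((F i).biUnion id).card : ℝ) ≤ ∑ B ∈ F i, (B.card : ℝ) := by
        exact_mod_cast Finset.card_biUnion_le
      have h4 : ∑ B ∈ F i, (B.card : ℝ) ≤ (F i).card * b i := by
        rw [← nsmul_eq_mul]
        exact Finset.sum_le_card_nsmul _ _ _ fun B hB => (hF1 i B hB).2.1
      have h5 : ((F i).card : ℝ) * b i ≤ μ i * b i :=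
        mul_le_mul_of_nonneg_right (hFcard i (by simpa [Nat.lt_succ_iff] using hi)) (hb0 i).le
      have h6 : μ i * b i = N / (64 * S) * ρ ^ i := by
        simp only [hμ, hb]; field_simp
      linarith
    have h7 := Finset.sum_le_sum h2
    rw [← Finset.mul_sum] at h7
    have h8 := geom_sum_bd hρ0.le hρ1 (Finset.range (J + 1))
    rw [← hS] at h8
    have h9 : N / (64 * S) * ∑ i ∈ Finset.range (J + 1), ρ ^ i ≤ N / (64 * S) * S :=
      mul_le_mul_of_nonneg_left h8 (by positivity)
    have h10 : N / (64 * S) * S = N / 64 := by field_simp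
    linarith
  set R := D \ U with hR
  have hRcard : N / 2 ≤ R.card := by
    have h1 : D.card ≤ R.card + U.card := by
      have := Finset.le_card_sdiff U D
      rw [← hR] at this
      omega
    have h2 : N ≤ R.card + U.card := by rw [hNdef]; exact_mod_cast h1
    linarith
  have hRpos : (0 : ℝ) < R.card := by linarith
  have hRne : R.Nonempty := by
    rw [← Finset.card_pos]; exact_mod_cast hRpos
  have hRD : R ⊆ D := Finset.sdiff_subset
  have hblock : ∀ i ≤ J, ∀ B ⊆ R, (B.card : ℝ) ≤ b i → ∀ f : ι → ℝ, (∀ l ∈ B, |f l| ≤ θ i) →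
      ‖∑ l ∈ B, f l • T (x l)‖ ≤ θ i * τ i := by
    intro i hi B hBR hBc f hf
    have h1 : B ⊆ D \ (F i).biUnion id := by
      refine hBR.trans (Finset.sdiff_subset_sdiff subset_rfl ?_)
      exact Finset.subset_biUnion_of_mem (fun i => (F i).biUnion id)
        (Finset.mem_range.2 (Nat.lt_succ_of_le hi))
    have h2 := hF3 i B h1
    have h3 : ‖∑ l ∈ B, (f l / θ i) • T (x l)‖ ≤ τ i := by
      by_contra hc
      push Not at hc
      refine h2 ⟨hBc, fun l => f l / θ i, fun l hl => ?_, hc⟩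
      rw [abs_div, abs_of_pos (hθ0 i), div_le_one (hθ0 i)]
      exact hf l hl
    have h4 : ∑ l ∈ B, f l • T (x l) = θ i • ∑ l ∈ B, (f l / θ i) • T (x l) := by
      rw [Finset.smul_sum]
      refine Finset.sum_congr rfl fun l _ => ?_
      rw [smul_smul, mul_div_cancel₀ _ (hθ0 i).ne']
    rw [h4, norm_smul, Real.norm_of_nonneg (hθ0 i).le]
    exact mul_le_mul_of_nonneg_left h3 (hθ0 i).le
  obtain ⟨k, hkR, f, hf2, hfk⟩ := exists_coeff V n hV R hRne (fun l => T (x l)) (fun l => hTV _)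
  have hf2' : ∑ l ∈ R, f l ^ 2 ≤ 2 * n / N := by
    refine hf2.trans ?_
    rw [div_le_div_iff₀ hRpos hN]
    nlinarith
  have hcheb : ∀ a : ℝ, 0 < a → ∀ B ⊆ R, (∀ l ∈ B, a < |f l|) → a ^ 2 * B.card ≤ 2 * n / N := by
    intro a ha B hB hBa
    refine le_trans ?_ hf2'
    refine le_trans ?_ (Finset.sum_le_sum_of_subset_of_nonneg hB fun l _ _ => sq_nonneg _)
    rw [mul_comm, ← nsmul_eq_mul]
    refine Finset.card_nsmul_le_sum _ _ _ fun l hl => ?_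
    rw [← sq_abs (f l)]
    exact pow_le_pow_left₀ ha.le (hBa l hl).le 2
  have hQ : ∀ i ≤ J, ‖∑ l ∈ R.filter (fun l => |f l| ≤ θ i), f l • T (x l)‖ ≤
      ∑ j ∈ Finset.range (i + 1), θ j * τ j := by
    intro i
    induction i with
    | zero =>
      intro h0
      simp only [zero_add, Finset.sum_range_one]
      refine hblock 0 h0 _ (Finset.filter_subset _ _) ?_ f (fun l hl => (Finset.mem_filter.1 hl).2)
      simp only [hb, pow_zero, div_one]
      rw [hNdef]
      exact_mod_cast Finset.card_le_card ((Finset.filter_subset _ _).trans hRD)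
    | succ i ih =>
      intro hi
      have hsplit : R.filter (fun l => |f l| ≤ θ (i + 1)) =
          R.filter (fun l => |f l| ≤ θ i) ∪ R.filter (fun l => θ i < |f l| ∧ |f l| ≤ θ (i + 1)) := by
        ext l
        have : θ i ≤ θ (i + 1) := by
          have := hθ0 i
          simp only [hθ, pow_succ] at this ⊢; linarith
        simp only [Finset.mem_filter, Finset.mem_union]
        constructor
        · rintro ⟨h1, h2⟩
          rcases le_or_gt (|f l|) (θ i) with h3 | h3
          · exact Or.inl ⟨h1, h3⟩
          · exact Or.inr ⟨h1, h3, h2⟩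
        · rintro (⟨h1, h2⟩ | ⟨h1, h2, h3⟩)
          · exact ⟨h1, h2.trans this⟩
          · exact ⟨h1, h3⟩
      have hdisj : Disjoint (R.filter (fun l => |f l| ≤ θ i))
          (R.filter (fun l => θ i < |f l| ∧ |f l| ≤ θ (i + 1))) := by
        rw [Finset.disjoint_filter]
        intro l _ h1 h2
        exact absurd h1 (not_le.2 h2.1)
      rw [hsplit, Finset.sum_union hdisj, Finset.sum_range_succ]
      refine (norm_add_le _ _).trans (add_le_add (ih (by omega)) ?_)
      refine hblock (i + 1) hi _ (Finset.filter_subset _ _) ?_ f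
        (fun l hl => (Finset.mem_filter.1 hl).2.2)
      have h1 := hcheb (θ i) (hθ0 i) (R.filter (fun l => θ i < |f l| ∧ |f l| ≤ θ (i + 1)))
        (Finset.filter_subset _ _)
        (fun l hl => (Finset.mem_filter.1 hl).2.1)
      have h2 : θ i ^ 2 = 8 * n * 4 ^ i / N ^ 2 := by
        simp only [hθ]
        have : (4 : ℝ) ^ i = 2 ^ i * 2 ^ i := by rw [← mul_pow]; norm_num
        have e : (√(8 * (n : ℝ)) / N * 2 ^ i) ^ 2
            = (√(8 * (n : ℝ)) * √(8 * (n : ℝ))) * (2 ^ i * 2 ^ i) / N ^ 2 := by ring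
        rw [this, e, hs8']
      rw [h2] at h1
      simp only [hb]
      rw [le_div_iff₀ (by positivity), pow_succ]
      rw [div_mul_eq_mul_div, div_le_div_iff₀ (by positivity) hN] at h1
      have h3 : (0 : ℝ) < 2 * n * N := by positivity
      refine le_of_mul_le_mul_left ?_ h3
      linarith
  have htop : ‖∑ l ∈ R.filter (fun l => ¬ |f l| ≤ θ J), f l • T (x l)‖ ≤ t / 2 := by
    have hθJ : 8 * n / N ≤ θ J := by
      have : √(8 * (n : ℝ)) ≤ 2 ^ J := by
        rw [Real.sqrt_le_left (by positivity)]
        have : ((2 : ℝ) ^ J) ^ 2 = 4 ^ J := by rw [← pow_mul, mul_comm, pow_mul]; norm_num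
        rw [this]; exact hj2.le
      simp only [hθ]
      rw [div_mul_eq_mul_div]
      refine div_le_div_of_nonneg_right ?_ hN.le
      calc 8 * (n : ℝ) = √(8 * (n : ℝ)) * √(8 * (n : ℝ)) := hs8'.symm
        _ ≤ √(8 * (n : ℝ)) * 2 ^ J := mul_le_mul_of_nonneg_left this hs8.le
    have h1 : ∀ l ∈ R.filter (fun l => ¬ |f l| ≤ θ J), ‖f l • T (x l)‖ ≤ (2 * t / θ J) * f l ^ 2 := by
      intro l hl
      obtain ⟨hlR, hl2⟩ := Finset.mem_filter.1 hl
      push Not at hl2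
      rw [norm_smul, Real.norm_eq_abs, ← sq_abs (f l), div_mul_eq_mul_div, le_div_iff₀ (hθ0 J)]
      have h2 := hup l (hRD hlR)
      have h3 : |f l| * ‖T (x l)‖ ≤ |f l| * (2 * t) := mul_le_mul_of_nonneg_left h2 (abs_nonneg _)
      calc |f l| * ‖T (x l)‖ * θ J ≤ |f l| * (2 * t) * |f l| :=
            mul_le_mul h3 hl2.le (hθ0 J).le (by positivity)
        _ = _ := by ring
    have hc : 0 ≤ 2 * t / θ J := by have := hθ0 J; positivity
    calc _ ≤ ∑ l ∈ R.filter (fun l => ¬ |f l| ≤ θ J), ‖f l • T (x l)‖ := norm_sum_le _ _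
      _ ≤ ∑ l ∈ R.filter (fun l => ¬ |f l| ≤ θ J), (2 * t / θ J) * f l ^ 2 := Finset.sum_le_sum h1
      _ = (2 * t / θ J) * ∑ l ∈ R.filter (fun l => ¬ |f l| ≤ θ J), f l ^ 2 := by
          rw [Finset.mul_sum]
      _ ≤ (2 * t / θ J) * (2 * n / N) := by
          refine mul_le_mul_of_nonneg_left ?_ hc
          exact le_trans (Finset.sum_le_sum_of_subset_of_nonneg (Finset.filter_subset _ _)
            fun l _ _ => sq_nonneg _) hf2'
      _ ≤ t / 2 := by
          rw [div_mul_eq_mul_div, div_le_iff₀ (hθ0 J)]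
          have : t / 2 * (8 * n / N) ≤ t / 2 * θ J := mul_le_mul_of_nonneg_left hθJ (by positivity)
          refine le_trans (le_of_eq ?_) this
          field_simp; norm_num
  have hfin : t < t / 2 + ∑ j ∈ Finset.range (J + 1), θ j * τ j := by
    calc t < ‖T (x k)‖ := hlow k (hRD hkR)
      _ = ‖∑ l ∈ R, f l • T (x l)‖ := by rw [← hfk]
      _ ≤ _ := by
        rw [← Finset.sum_filter_add_sum_filter_not R (fun l => |f l| ≤ θ J)]
        refine (norm_add_le _ _).trans ?_
        rw [add_comm]
        exact add_le_add htop (hQ J le_rfl)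
  set c := 64 * S * √(8 * (n : ℝ)) * K * N ^ (-(1 / q)) with hc
  have hc0 : 0 ≤ c := by positivity
  have hsum : ∑ j ∈ Finset.range (J + 1), θ j * τ j ≤ c * S := by
    calc _ ≤ ∑ j ∈ Finset.range (J + 1), c * ρ ^ j := Finset.sum_le_sum fun j _ =>
          level_numeric hp hr hpq hK (by linarith) hN hS1 hρ hρ1.le j
      _ = c * ∑ j ∈ Finset.range (J + 1), ρ ^ j := by rw [Finset.mul_sum]
      _ ≤ c * S := by
          rw [hS]
          exact mul_le_mul_of_nonneg_left (geom_sum_bd hρ0.le hρ1 _) hc0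
  have h8 : √(8 * (n : ℝ)) ≤ 4 * √n := by
    rw [Real.sqrt_le_left (by positivity), mul_pow, Real.sq_sqrt (by positivity)]
    linarith
  have hcS : 2 * (c * S) ≤ 512 * S ^ 2 * √n * K * N ^ (-(1 / q)) := by
    have h9 : 0 ≤ 128 * S ^ 2 * K * N ^ (-(1 / q)) := by positivity
    calc 2 * (c * S) = 128 * S ^ 2 * K * N ^ (-(1 / q)) * √(8 * (n : ℝ)) := by rw [hc]; ring
      _ ≤ 128 * S ^ 2 * K * N ^ (-(1 / q)) * (4 * √n) := mul_le_mul_of_nonneg_left h8 h9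
      _ = _ := by ring
  linarith


lemma main_real (h : Bd T p q K m) (hp : 1 ≤ p) (hq : 1 ≤ q) {r : ℝ} (hr : 2 < r)
    (hpq : 1 / q = 1 / p + 1 / r) (hK : 0 ≤ K) (n : ℕ) (hn : 1 ≤ n)
    (hm : m = ⌊(n : ℝ) ^ (r / 2)⌋₊)
    (V : Submodule ℝ Y) [FiniteDimensional ℝ V] (hV : Module.finrank ℝ V ≤ n)
    (hTV : ∀ x, T x ∈ V) {S S' C ρ σ : ℝ} (hρ : ρ = (2 : ℝ) ^ (-(1 / 2 - 1 / r)))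
    (hS : S = 1 / (1 - ρ)) (hσ : σ = (2 : ℝ) ^ (-(1 / r))) (hS' : S' = 1 / (1 - σ))
    (hC : C = 512 * S ^ 2)
    {ι : Type*} [DecidableEq ι] (s : Finset ι) (x : ι → X)
    (hx : ∀ f : X →L[ℝ] ℝ, ‖f‖ ≤ 1 → ∑ i ∈ s, |f (x i)| ^ q ≤ 1) :
    ∑ k ∈ s, ‖T (x k)‖ ^ p ≤ ((1 + 4 * C * S') * K) ^ p := by
  have hp0 : 0 < p := by linarith
  have hq0 : 0 < q := by linarith
  have hr0 : 0 < r := by linarith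
  have hnR : (1 : ℝ) ≤ n := by exact_mod_cast hn
  have hnpow : (n : ℝ) ≤ (n : ℝ) ^ (r / 2) := by
    calc (n : ℝ) = (n : ℝ) ^ (1 : ℝ) := (Real.rpow_one _).symm
      _ ≤ _ := Real.rpow_le_rpow_of_exponent_le hnR (by linarith)
  have hnm : n ≤ m := by rw [hm]; exact Nat.le_floor hnpow
  have hm1 : 1 ≤ m := hn.trans hnm
  have hmR : (1 : ℝ) ≤ m := by exact_mod_cast hm1
  have hm2 : (n : ℝ) ^ (r / 2) ≤ 2 * m := by
    have := Nat.lt_floor_add_one ((n : ℝ) ^ (r / 2))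
    rw [← hm] at this
    linarith
  have hsub : ∀ A ⊆ s, ∀ f : X →L[ℝ] ℝ, ‖f‖ ≤ 1 → ∑ i ∈ A, |f (x i)| ^ q ≤ 1 := fun A hA f hf =>
    (Finset.sum_le_sum_of_subset_of_nonneg hA fun _ _ _ => by positivity).trans (hx f hf)
  have hBd : ∀ A ⊆ s, A.card ≤ m → ∑ k ∈ A, ‖T (x k)‖ ^ p ≤ K ^ p := by
    intro A hA hAm
    have := h.finset A hAm x 1 one_pos (fun f hf => by rw [Real.one_rpow]; exact hsub A hA f hf)
    rwa [mul_one] at this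
  rcases hK.eq_or_lt with hK0 | hK0
  · rw [← hK0, mul_zero, Real.zero_rpow hp0.ne']
    refine Finset.sum_nonpos fun k hk => ?_
    have := hBd {k} (by simpa using hk) (by simpa using hm1)
    rwa [Finset.sum_singleton, ← hK0, Real.zero_rpow hp0.ne'] at this
  have hρ0 : 0 < ρ := by rw [hρ]; positivity
  have hρ1 : ρ < 1 := by
    rw [hρ]
    apply Real.rpow_lt_one_of_one_lt_of_neg (by norm_num)
    have : 1 / r < 1 / 2 := one_div_lt_one_div_of_lt (by norm_num) hr
    linarith
  have hS1 : 1 ≤ S := by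
    rw [hS, one_div]; exact (one_le_inv₀ (by linarith)).2 (by linarith)
  have hσ0 : 0 < σ := by rw [hσ]; positivity
  have hσ1 : σ < 1 := by
    rw [hσ]
    apply Real.rpow_lt_one_of_one_lt_of_neg (by norm_num)
    have : 0 < 1 / r := by positivity
    linarith
  have hS'1 : 1 ≤ S' := by
    rw [hS', one_div]; exact (one_le_inv₀ (by linarith)).2 (by linarith)
  have hC1 : 1 ≤ C := by rw [hC]; nlinarith
  have hrel : p - q = p * q / r := by
    field_simp at hpq ⊢; linarith
  have hpqr : 1 / r ≤ p - q := by
    rw [hrel]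
    gcongr
    nlinarith
  have hqp : q ≤ p := by
    have : 0 < 1 / r := by positivity
    linarith
  have hqr : q / r ≤ 1 := by
    have : 0 < 1 / p := by positivity
    have h1 : 1 / r ≤ 1 / q := by linarith
    rw [div_le_one hr0]
    exact (one_div_le_one_div hr0 hq0).1 h1
  set t0 : ℝ := K * (m : ℝ) ^ (-(1 / p)) with ht0
  have ht00 : 0 < t0 := by positivity
  have ht0p : (m : ℝ) * t0 ^ p = K ^ p := by
    rw [ht0, Real.mul_rpow hK (by positivity), ← Real.rpow_mul (by positivity)]
    have : -(1 / p) * p = -1 := by field_simp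
    rw [this, Real.rpow_neg_one]; field_simp
  -- top part
  have htop : ∑ k ∈ s.filter (fun k => t0 < ‖T (x k)‖), ‖T (x k)‖ ^ p ≤ K ^ p := by
    refine hBd _ (Finset.filter_subset _ _) ?_
    by_contra hc
    push Not at hc
    obtain ⟨G, hG, hGc⟩ := Finset.exists_subset_card_eq hc.le
    have h1 := hBd G (hG.trans (Finset.filter_subset _ _)) hGc.le
    have h2 : ∑ k ∈ G, t0 ^ p < ∑ k ∈ G, ‖T (x k)‖ ^ p := by
      refine Finset.sum_lt_sum_of_nonempty ?_ fun k hk => ?_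
      · rw [← Finset.card_pos]; omega
      · exact Real.rpow_lt_rpow ht00.le (Finset.mem_filter.1 (hG hk)).2 hp0
    rw [Finset.sum_const, nsmul_eq_mul, hGc, ht0p] at h2
    linarith
  -- levels
  have hlev : ∀ k, ∃ i : ℕ, (0 < ‖T (x k)‖ ∧ ‖T (x k)‖ ≤ t0) →
      t0 * (1 / 2) ^ (i + 1) < ‖T (x k)‖ ∧ ‖T (x k)‖ ≤ t0 * (1 / 2) ^ i := by
    intro k
    by_cases hk : 0 < ‖T (x k)‖ ∧ ‖T (x k)‖ ≤ t0
    · obtain ⟨i, h1, h2⟩ := exists_nat_pow_near_of_lt_one (x := ‖T (x k)‖ / t0) (y := (1 / 2 : ℝ))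
        (div_pos hk.1 ht00) ((div_le_one ht00).2 hk.2) (by norm_num) (by norm_num)
      refine ⟨i, fun _ => ⟨?_, ?_⟩⟩
      · rw [lt_div_iff₀ ht00] at h1; linarith
      · rw [div_le_iff₀ ht00] at h2; linarith
    · exact ⟨0, fun h => absurd h hk⟩
  choose lev hlev using hlev
  set E := s.filter (fun k => 0 < ‖T (x k)‖ ∧ ‖T (x k)‖ ≤ t0) with hE
  set A : ℝ := 2 ^ p * 2 * C ^ p * K ^ p with hA
  have hA0 : 0 ≤ A := by positivity
  have hfib : ∀ i, ∑ k ∈ E.filter (fun k => lev k = i), ‖T (x k)‖ ^ p ≤ A * σ ^ i := by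
    intro i
    set D := E.filter (fun k => lev k = i) with hD
    have hDs : D ⊆ s := (Finset.filter_subset _ _).trans (Finset.filter_subset _ _)
    rcases D.eq_empty_or_nonempty with hDe | hDne
    · rw [hDe, Finset.sum_empty]; positivity
    set t := t0 * (1 / 2) ^ (i + 1) with ht
    have ht_pos : 0 < t := by positivity
    have hmem : ∀ k ∈ D, t < ‖T (x k)‖ ∧ ‖T (x k)‖ ≤ 2 * t := by
      intro k hk
      obtain ⟨h1, h2⟩ := Finset.mem_filter.1 hk
      have h3 := hlev k (Finset.mem_filter.1 h1).2
      rw [h2] at h3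
      refine ⟨h3.1, h3.2.trans (le_of_eq ?_)⟩
      rw [ht, pow_succ]; ring
    have hflat := flat_bound h hp hq hr hpq hK0 n hn hnm V hV hTV hρ hS D hDne x (hsub D hDs) t
      ht_pos (fun k hk => (hmem k hk).1) (fun k hk => (hmem k hk).2)
    rw [← hC] at hflat
    have hNpos : (0 : ℝ) < D.card := by exact_mod_cast hDne.card_pos
    set N : ℝ := (D.card : ℝ) with hN
    have hNq : N * t ^ q ≤ C ^ q * √n ^ q * K ^ q := by
      have h1 := Real.rpow_le_rpow ht_pos.le hflat hq0.le
      have h2 : (C * √n * K * N ^ (-(1 / q))) ^ q = C ^ q * √n ^ q * K ^ q * N⁻¹ := by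
        rw [Real.mul_rpow (by positivity) (by positivity), Real.mul_rpow (by positivity) hK,
          Real.mul_rpow (by positivity) (by positivity), ← Real.rpow_mul hNpos.le,
          ← Real.rpow_neg_one N]
        congr 2; field_simp
      rw [h2, ← div_eq_mul_inv, le_div_iff₀ hNpos] at h1
      linarith
    have hsum : ∑ k ∈ D, ‖T (x k)‖ ^ p ≤ N * (2 * t) ^ p := by
      rw [hN, ← nsmul_eq_mul]
      exact Finset.sum_le_card_nsmul _ _ _ fun k hk =>
        Real.rpow_le_rpow (norm_nonneg _) (hmem k hk).2 hp0.le
    have hsq : √n ^ q ≤ 2 * (m : ℝ) ^ (q / r) := by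
      calc √n ^ q = ((n : ℝ) ^ (r / 2)) ^ (q / r) := by
            rw [Real.sqrt_eq_rpow, ← Real.rpow_mul (by positivity), ← Real.rpow_mul (by positivity)]
            congr 1; field_simp
        _ ≤ (2 * m) ^ (q / r) := Real.rpow_le_rpow (by positivity) hm2 (by positivity)
        _ = 2 ^ (q / r) * (m : ℝ) ^ (q / r) := Real.mul_rpow (by norm_num) (by positivity)
        _ ≤ 2 ^ (1 : ℝ) * (m : ℝ) ^ (q / r) := by
            refine mul_le_mul_of_nonneg_right ?_ (by positivity)
            exact Real.rpow_le_rpow_of_exponent_le (by norm_num) hqr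
        _ = _ := by rw [Real.rpow_one]
    have htpq : t ^ (p - q) ≤ K ^ (p - q) * (m : ℝ) ^ (-(q / r)) * σ ^ i := by
      rw [ht, ht0, Real.mul_rpow (by positivity) (by positivity), Real.mul_rpow hK (by positivity),
        ← Real.rpow_mul (by positivity)]
      have e1 : -(1 / p) * (p - q) = -(q / r) := by rw [hrel]; field_simp
      rw [e1]
      refine mul_le_mul_of_nonneg_left ?_ (by positivity)
      have e2 : σ ^ i = ((1 / 2 : ℝ) ^ i) ^ (1 / r) := by
        rw [hσ, ← Real.rpow_natCast, ← Real.rpow_natCast, ← Real.rpow_mul (by norm_num),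
          ← Real.rpow_mul (by norm_num), one_div (2 : ℝ), Real.inv_rpow (by norm_num),
          ← Real.rpow_neg (by norm_num)]
        congr 1; ring
      rw [e2]
      have h3 : (1 / 2 : ℝ) ^ (i + 1) ≤ (1 / 2) ^ i :=
        pow_le_pow_of_le_one (by norm_num) (by norm_num) (by omega)
      calc ((1 / 2 : ℝ) ^ (i + 1)) ^ (p - q) ≤ ((1 / 2 : ℝ) ^ i) ^ (p - q) :=
            Real.rpow_le_rpow (by positivity) h3 (by linarith)
        _ ≤ _ := Real.rpow_le_rpow_of_exponent_ge (by positivity)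
              (pow_le_one₀ (by norm_num) (by norm_num)) hpqr
    have hCq : C ^ q ≤ C ^ p := Real.rpow_le_rpow_of_exponent_le hC1 hqp
    calc ∑ k ∈ D, ‖T (x k)‖ ^ p ≤ N * (2 * t) ^ p := hsum
      _ = 2 ^ p * (N * t ^ q) * t ^ (p - q) := by
          rw [Real.mul_rpow (by norm_num) ht_pos.le, Real.rpow_sub ht_pos]
          field_simp
      _ ≤ 2 ^ p * (C ^ p * (2 * (m : ℝ) ^ (q / r)) * K ^ q) *
            (K ^ (p - q) * (m : ℝ) ^ (-(q / r)) * σ ^ i) := by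
          refine mul_le_mul ?_ htpq (by positivity) (by positivity)
          refine mul_le_mul_of_nonneg_left (hNq.trans ?_) (by positivity)
          gcongr
      _ = A * σ ^ i := by
          rw [hA, Real.rpow_neg (by positivity), Real.rpow_sub hK0]
          field_simp
  have hrest : ∑ k ∈ E, ‖T (x k)‖ ^ p ≤ A * S' := by
    rw [← Finset.sum_fiberwise_of_maps_to (t := E.image lev) (g := lev)
      (fun k hk => Finset.mem_image_of_mem _ hk)]
    refine (Finset.sum_le_sum fun i _ => hfib i).trans ?_
    rw [← Finset.mul_sum, hS']
    exact mul_le_mul_of_nonneg_left (geom_sum_bd hσ0.le hσ1 _) hA0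
  have hnot : ∑ k ∈ s.filter (fun k => ¬ t0 < ‖T (x k)‖), ‖T (x k)‖ ^ p ≤ ∑ k ∈ E, ‖T (x k)‖ ^ p := by
    refine le_of_eq (Finset.sum_subset ?_ ?_).symm
    · intro k hk
      obtain ⟨h1, h2, h3⟩ := Finset.mem_filter.1 hk
      exact Finset.mem_filter.2 ⟨h1, not_lt.2 h3⟩
    · intro k hk hkE
      obtain ⟨h1, h2⟩ := Finset.mem_filter.1 hk
      have : ‖T (x k)‖ = 0 := by
        by_contra h3
        exact hkE (Finset.mem_filter.2 ⟨h1, lt_of_le_of_ne (norm_nonneg _) (Ne.symm h3), not_lt.1 h2⟩)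
      rw [this, Real.zero_rpow hp0.ne']
  rw [← Finset.sum_filter_add_sum_filter_not s (fun k => t0 < ‖T (x k)‖)]
  have hfin : K ^ p + A * S' ≤ ((1 + 4 * C * S') * K) ^ p := by
    rw [Real.mul_rpow (by positivity) hK]
    have h1 := Real.add_rpow_le_rpow_add (a := 1) (b := 4 * C * S') (by norm_num) (by positivity) hp
    rw [Real.one_rpow, Real.mul_rpow (by positivity) (by positivity),
      Real.mul_rpow (by positivity) (by positivity)] at h1
    have h4 : (2 : ℝ) ^ p * 2 ≤ 4 ^ p := by
      have e : (4 : ℝ) = 2 * 2 := by norm_num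
      rw [e, Real.mul_rpow (by norm_num) (by norm_num)]
      refine mul_le_mul_of_nonneg_left ?_ (by positivity)
      calc (2 : ℝ) = 2 ^ (1 : ℝ) := (Real.rpow_one _).symm
        _ ≤ _ := Real.rpow_le_rpow_of_exponent_le (by norm_num) hp
    have h5 : S' ≤ S' ^ p := by
      calc S' = S' ^ (1 : ℝ) := (Real.rpow_one _).symm
        _ ≤ _ := Real.rpow_le_rpow_of_exponent_le hS'1 hp
    have h6 : (2 : ℝ) ^ p * 2 * C ^ p * S' ≤ 4 ^ p * C ^ p * S' ^ p := by gcongr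
    have h7 : 0 ≤ K ^ p := by positivity
    rw [hA]
    nlinarith
  linarith

end


lemma eSum_le_iff_s2 {p : ℝ≥0∞} (hp0 : p ≠ 0) (hp : p ≠ ∞) {ι : Type*} [Fintype ι] (a : ι → ℝ)
    (ha : ∀ i, 0 ≤ a i) (c : ℝ) (hc : 0 ≤ c) :
    eSum p (fun i => ENNReal.ofReal (a i)) ≤ ENNReal.ofReal c ↔
      ∑ i, a i ^ p.toReal ≤ c ^ p.toReal := by
  have hpr : 0 < p.toReal := ENNReal.toReal_pos hp0 hp
  have h1 : ∑ i, ENNReal.ofReal (a i) ^ p.toReal = ENNReal.ofReal (∑ i, a i ^ p.toReal) := by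
    rw [ENNReal.ofReal_sum_of_nonneg (fun i _ => Real.rpow_nonneg (ha i) _)]
    exact Finset.sum_congr rfl fun i _ => ENNReal.ofReal_rpow_of_nonneg (ha i) hpr.le
  rw [eSum, if_neg hp, h1, one_div, ENNReal.rpow_inv_le_iff hpr,
    ENNReal.ofReal_rpow_of_nonneg hc hpr.le,
    ENNReal.ofReal_le_ofReal_iff (Real.rpow_nonneg hc _)]

lemma weakLq_le_iff {q : ℝ≥0∞} (hq0 : q ≠ 0) (hq : q ≠ ∞) {X : Type*} [NormedAddCommGroup X]
    [NormedSpace ℝ X] {N : ℕ} (x : Fin N → X) :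
    weakLq q x ≤ 1 ↔ ∀ f : X →L[ℝ] ℝ, ‖f‖ ≤ 1 → ∑ i, |f (x i)| ^ q.toReal ≤ 1 := by
  rw [weakLq, iSup_le_iff, Subtype.forall]
  refine forall₂_congr fun f hf => ?_
  rw [← ENNReal.ofReal_one, eSum_le_iff_s2 hq0 hq _ (fun i => abs_nonneg _) 1 zero_le_one,
    Real.one_rpow]

section
variable {X Y : Type*} [NormedAddCommGroup X] [NormedSpace ℝ X]
    [NormedAddCommGroup Y] [NormedSpace ℝ Y]

lemma Bd_of_piN {p q : ℝ≥0∞} (hp0 : p ≠ 0) (hp : p ≠ ∞) (hq0 : q ≠ 0) (hq : q ≠ ∞)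
    (T : X →L[ℝ] Y) (m : ℕ) (hfin : piN p q m T ≠ ∞) :
    Bd T p.toReal q.toReal (piN p q m T).toReal m := by
  intro M hM x W hW hx
  have hpr : 0 < p.toReal := ENNReal.toReal_pos hp0 hp
  have hqr : 0 < q.toReal := ENNReal.toReal_pos hq0 hq
  obtain ⟨d, rfl⟩ := Nat.exists_eq_add_of_le hM
  set K := (piN p q (M + d) T).toReal with hK
  let x' : Fin (M + d) → X := Fin.append (fun i => W⁻¹ • x i) (fun _ => 0)
  have hw : weakLq q x' ≤ 1 := by
    rw [weakLq_le_iff hq0 hq]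
    intro f hf
    rw [Fin.sum_univ_add]
    simp only [x', Fin.append_left, Fin.append_right, map_zero, abs_zero,
      Real.zero_rpow hqr.ne', Finset.sum_const_zero, add_zero, map_smul, smul_eq_mul, abs_mul]
    have h1 : ∀ i, (|W⁻¹| * |f (x i)|) ^ q.toReal = (W ^ q.toReal)⁻¹ * |f (x i)| ^ q.toReal := by
      intro i
      rw [Real.mul_rpow (abs_nonneg _) (abs_nonneg _), abs_of_pos (inv_pos.2 hW),
        Real.inv_rpow hW.le]
    simp only [h1]
    rw [← Finset.mul_sum, inv_mul_le_iff₀ (by positivity), mul_one]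
    exact hx f hf
  have hle : eSum p (fun k => ENNReal.ofReal ‖T (x' k)‖) ≤ ENNReal.ofReal K := by
    rw [hK, ENNReal.ofReal_toReal hfin]
    exact le_iSup (fun x : {x : Fin (M + d) → X // weakLq q x ≤ 1} =>
      eSum p fun k => ENNReal.ofReal ‖T (x.1 k)‖) ⟨x', hw⟩
  rw [eSum_le_iff_s2 hp0 hp _ (fun i => norm_nonneg _) _ ENNReal.toReal_nonneg, Fin.sum_univ_add] at hle
  simp only [x', Fin.append_left, Fin.append_right, map_zero, norm_zero,
      Real.zero_rpow hpr.ne', Finset.sum_const_zero, add_zero, map_smul, norm_smul] at hle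
  have h1 : ∀ i, (‖W⁻¹‖ * ‖T (x i)‖) ^ p.toReal = (W ^ p.toReal)⁻¹ * ‖T (x i)‖ ^ p.toReal := by
    intro i
    rw [Real.mul_rpow (norm_nonneg _) (norm_nonneg _), Real.norm_of_nonneg (inv_pos.2 hW).le,
      Real.inv_rpow hW.le]
  simp only [h1] at hle
  rw [← Finset.mul_sum, inv_mul_le_iff₀ (by positivity)] at hle
  rw [Real.mul_rpow ENNReal.toReal_nonneg hW.le, mul_comm]
  exact hle

lemma piPQ_top_le {q : ℝ≥0∞} (hq0 : q ≠ 0) (hq : q ≠ ∞) (T : X →L[ℝ] Y) (m : ℕ) (hm : 1 ≤ m) :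
    piPQ ∞ q T ≤ piN ∞ q m T := by
  have hqr : 0 < q.toReal := ENNReal.toReal_pos hq0 hq
  refine iSup_le fun N => iSup_le fun ⟨x, hx⟩ => ?_
  simp only [eSum, if_true]
  refine iSup_le fun k => ?_
  let x' : Fin m → X := fun i => if i = ⟨0, hm⟩ then x k else 0
  have hw : weakLq q x' ≤ 1 := by
    rw [weakLq_le_iff hq0 hq] at hx ⊢
    intro f hf
    refine le_trans ?_ (hx f hf)
    rw [Finset.sum_eq_single (⟨0, hm⟩ : Fin m)]
    · simp only [x', if_true]
      exact Finset.single_le_sum (f := fun i => |f (x i)| ^ q.toReal)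
        (fun i _ => Real.rpow_nonneg (abs_nonneg _) _) (Finset.mem_univ k)
    · intro i _ hi
      simp [x', hi, Real.zero_rpow hqr.ne']
    · simp
  refine le_trans ?_ (le_iSup (fun x : {x : Fin m → X // weakLq q x ≤ 1} =>
      eSum ∞ fun k => ENNReal.ofReal ‖T (x.1 k)‖) ⟨x', hw⟩)
  simp only [eSum, if_true]
  refine le_trans ?_ (le_iSup (fun i => ENNReal.ofReal ‖T (x' i)‖) ⟨0, hm⟩)
  simp [x']

lemma piPQ_zero {p q : ℝ≥0∞} (hp0 : p ≠ 0) (T : X →L[ℝ] Y) (hT : ∀ x, T x = 0) :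
    piPQ p q T ≤ 0 := by
  refine iSup_le fun N => iSup_le fun ⟨x, hx⟩ => ?_
  by_cases hp : p = ∞
  · simp [eSum, hp, hT]
  · have hpr : 0 < p.toReal := ENNReal.toReal_pos hp0 hp
    simp [eSum, hp, hT, hpr]

end

/-- for `1 ≤ q < p ≤ ∞` with `1/q = 1/p + 1/r` and `2 < r < ∞`,
there is a constant `c_r` such that `π_{p,q}(T) ≤ c_r · π_{p,q}^{⌊n^{r/2}⌋}(T)`
for every operator `T` between real Banach spaces of rank at most `n`. -/
theorem statement2 (r : ℝ≥0∞) (hr1 : 2 < r) (hr2 : r < ∞) :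
    ∃ c : ℝ≥0, 0 < c ∧
      ∀ (q p : ℝ≥0∞), 1 ≤ q → q < p → 1 / q = 1 / p + 1 / r →
        ∀ (X Y : Type*) [NormedAddCommGroup X] [NormedSpace ℝ X] [CompleteSpace X]
          [NormedAddCommGroup Y] [NormedSpace ℝ Y] [CompleteSpace Y]
          (n : ℕ) (T : X →L[ℝ] Y), RankLE T n →
          piPQ p q T ≤ (c : ℝ≥0∞) * piN p q (⌊(n : ℝ) ^ (r.toReal / 2)⌋₊) T := by
  have hR : 2 < r.toReal := by
    have := (ENNReal.toReal_lt_toReal (by norm_num) hr2.ne).2 hr1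
    simpa using this
  set R := r.toReal with hRdef
  set ρ : ℝ := (2 : ℝ) ^ (-(1 / 2 - 1 / R)) with hρ
  set S : ℝ := 1 / (1 - ρ) with hS
  set σ : ℝ := (2 : ℝ) ^ (-(1 / R)) with hσ
  set S' : ℝ := 1 / (1 - σ) with hS'
  have hσ1 : σ < 1 := by
    rw [hσ]
    apply Real.rpow_lt_one_of_one_lt_of_neg (by norm_num)
    have : 0 < 1 / R := by positivity
    linarith
  have hS'0 : 0 ≤ S' := by
    rw [hS']; exact div_nonneg zero_le_one (by linarith)
  set C : ℝ := 1 + 4 * (512 * S ^ 2) * S' with hC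
  have hC1 : 1 ≤ C := by
    rw [hC]
    have : 0 ≤ 4 * (512 * S ^ 2) * S' := by positivity
    linarith
  have hcoe : ((C.toNNReal : ℝ≥0) : ℝ≥0∞) = ENNReal.ofReal C := rfl
  refine ⟨C.toNNReal, Real.toNNReal_pos.2 (by linarith), ?_⟩
  rw [hcoe]
  intro q p hq hqp hpq X Y _ _ _ _ _ _ n T hT
  obtain ⟨hT1, hT2⟩ := hT
  have hq0 : q ≠ 0 := (zero_lt_one.trans_le hq).ne'
  have hqt : q ≠ ∞ := (hqp.trans_le le_top).ne
  have hp0 : p ≠ 0 := (zero_lt_one.trans_le (hq.trans hqp.le)).ne'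
  rcases Nat.eq_zero_or_pos n with hn | hn
  · refine (piPQ_zero hp0 T fun x => ?_).trans zero_le
    have h0 : Module.finrank ℝ (LinearMap.range (T : X →ₗ[ℝ] Y)) = 0 := by omega
    have h1 := Submodule.finrank_eq_zero.1 h0
    have h2 : T x ∈ LinearMap.range (T : X →ₗ[ℝ] Y) := ⟨x, rfl⟩
    rw [h1] at h2
    simpa using h2
  have hnR : (1 : ℝ) ≤ n := by exact_mod_cast hn
  set m := ⌊(n : ℝ) ^ (R / 2)⌋₊ with hm
  have hm1 : 1 ≤ m := by
    rw [hm]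
    refine Nat.le_floor ?_
    rw [Nat.cast_one]
    exact Real.one_le_rpow hnR (by linarith)
  by_cases hp : p = ∞
  · subst hp
    refine (piPQ_top_le hq0 hqt T m hm1).trans ?_
    refine le_mul_of_one_le_left zero_le ?_
    rw [← ENNReal.ofReal_one]
    exact ENNReal.ofReal_le_ofReal hC1
  by_cases hfin : piN p q m T = ∞
  · rw [hfin, ENNReal.mul_top]
    · exact le_top
    · exact (ENNReal.ofReal_pos.2 (by linarith)).ne'
  have hBd := Bd_of_piN hp0 hp hq0 hqt T m hfin
  have hq1 : 1 ≤ q.toReal := by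
    have := (ENNReal.toReal_le_toReal (by norm_num) hqt).2 hq
    simpa using this
  have hp1 : 1 ≤ p.toReal := by
    have := (ENNReal.toReal_le_toReal (by norm_num) hp).2 (hq.trans hqp.le)
    simpa using this
  have hr0 : r ≠ 0 := (zero_lt_two.trans hr1).ne'
  have hpqr : 1 / q.toReal = 1 / p.toReal + 1 / R := by
    have := congrArg ENNReal.toReal hpq
    rw [ENNReal.toReal_add (by simp [hp0]) (by simp [hr0])] at this
    simpa using this
  set K := (piN p q m T).toReal with hK
  have hK' : piN p q m T = ENNReal.ofReal K := (ENNReal.ofReal_toReal hfin).symm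
  rw [hK', ← ENNReal.ofReal_mul (by linarith)]
  refine iSup_le fun N => iSup_le fun ⟨x, hx⟩ => ?_
  have hK0 : 0 ≤ K := ENNReal.toReal_nonneg
  rw [eSum_le_iff_s2 hp0 hp _ (fun i => norm_nonneg _) _ (mul_nonneg (by linarith) hK0)]
  rw [weakLq_le_iff hq0 hqt] at hx
  exact main_real hBd hp1 hq1 hR hpqr hK0 n hn hm
    (LinearMap.range (T : X →ₗ[ℝ] Y)) hT2 (fun x => ⟨x, rfl⟩) hρ hS hσ hS' rfl Finset.univ x hx

end
end

section
/- Let 1 ≤ q ≤ p ≤ ∞ and let 1 ≤ r ≤ s ≤ q' (where 1/q + 1/q' = 1) satisfy 1/r = 1/p + 1/s. Then for every bounded linear operator T : X → Y between real Banach spaces and every n ∈ ℕ one has the quotient formula π_{p,q}^n(T) = sup{ π_{r,1}^n(T ∘ V ∘ D_σ) : V : ℓ_{q'} → X is a bounded linear operator with ‖V‖ ≤ 1, and σ ∈ ℓ_s with ‖σ‖_s ≤ 1 }, where D_σ : ℓ_∞ → ℓ_{q'} denotes the diagonal operator D_σ(τ) = (σ_k τ_k)_k. -/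
open scoped ENNReal NNReal BigOperators

noncomputable section

/-! ### Finite `ℓ_p` sums -/

lemma eSum_top {ι : Type*} [Fintype ι] (f : ι → ℝ≥0∞) : eSum ∞ f = ⨆ i, f i := by
  simp [eSum]

lemma eSum_ne {p : ℝ≥0∞} (hp : p ≠ ∞) {ι : Type*} [Fintype ι] (f : ι → ℝ≥0∞) :
    eSum p f = (∑ i, f i ^ p.toReal) ^ (1 / p.toReal) := by
  simp [eSum, hp]

lemma toReal_pos_of {p : ℝ≥0∞} (h1 : 1 ≤ p) (hp : p ≠ ∞) : 0 < p.toReal :=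
  ENNReal.toReal_pos (by rintro rfl; simp at h1) hp

lemma one_le_toReal {p : ℝ≥0∞} (h1 : 1 ≤ p) (hp : p ≠ ∞) : 1 ≤ p.toReal := by
  simpa using ENNReal.toReal_mono hp h1

lemma eSum_rpow {p : ℝ≥0∞} (h1 : 1 ≤ p) (hp : p ≠ ∞) {ι : Type*} [Fintype ι] (f : ι → ℝ≥0∞) :
    eSum p f ^ p.toReal = ∑ i, f i ^ p.toReal := by
  rw [eSum_ne hp, ← ENNReal.rpow_mul, one_div_mul_cancel (toReal_pos_of h1 hp).ne',
    ENNReal.rpow_one]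

lemma eSum_mono (p : ℝ≥0∞) {ι : Type*} [Fintype ι] {f g : ι → ℝ≥0∞} (h : ∀ i, f i ≤ g i) :
    eSum p f ≤ eSum p g := by
  by_cases hp : p = ∞
  · subst hp; rw [eSum_top, eSum_top]; exact iSup_mono h
  · rw [eSum_ne hp, eSum_ne hp]
    refine ENNReal.rpow_le_rpow (Finset.sum_le_sum fun i _ => ?_) (by positivity)
    exact ENNReal.rpow_le_rpow (h i) (by positivity)

lemma le_eSum {p : ℝ≥0∞} (h1 : 1 ≤ p) {ι : Type*} [Fintype ι] (f : ι → ℝ≥0∞) (i : ι) :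
    f i ≤ eSum p f := by
  by_cases hp : p = ∞
  · subst hp; rw [eSum_top]; exact le_iSup f i
  · have h0 := toReal_pos_of h1 hp
    rw [← ENNReal.rpow_le_rpow_iff h0, eSum_rpow h1 hp]
    exact Finset.single_le_sum (f := fun i => f i ^ p.toReal) (fun _ _ => zero_le)
      (Finset.mem_univ i)

lemma eSum_const_mul {p : ℝ≥0∞} (h1 : 1 ≤ p) {ι : Type*} [Fintype ι] (c : ℝ≥0∞)
    (f : ι → ℝ≥0∞) : eSum p (fun i => c * f i) = c * eSum p f := by
  by_cases hp : p = ∞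
  · subst hp; rw [eSum_top, eSum_top, ENNReal.mul_iSup]
  · have h0 := toReal_pos_of h1 hp
    rw [eSum_ne hp, eSum_ne hp]
    simp_rw [ENNReal.mul_rpow_of_nonneg _ _ h0.le]
    rw [← Finset.mul_sum, ENNReal.mul_rpow_of_nonneg _ _ (by positivity), ← ENNReal.rpow_mul,
      mul_one_div_cancel h0.ne', ENNReal.rpow_one]

lemma eSum_add_le {p : ℝ≥0∞} (h1 : 1 ≤ p) {ι : Type*} [Fintype ι] (f g : ι → ℝ≥0∞) :
    eSum p (fun i => f i + g i) ≤ eSum p f + eSum p g := by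
  by_cases hp : p = ∞
  · subst hp; simp_rw [eSum_top]
    exact iSup_le fun i => add_le_add (le_iSup f i) (le_iSup g i)
  · simp_rw [eSum_ne hp]
    exact ENNReal.Lp_add_le _ f g (one_le_toReal h1 hp)

lemma eSum_anti {s q : ℝ≥0∞} (h1 : 1 ≤ s) (hsq : s ≤ q) {ι : Type*} [Fintype ι]
    (f : ι → ℝ≥0∞) : eSum q f ≤ eSum s f := by
  by_cases hq : q = ∞
  · subst hq; rw [eSum_top]; exact iSup_le fun i => le_eSum h1 f i
  have hs : s ≠ ∞ := fun h => hq (top_le_iff.1 (h ▸ hsq))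
  have h1q := h1.trans hsq
  have h0 := toReal_pos_of h1q hq
  have hle : s.toReal ≤ q.toReal := ENNReal.toReal_mono hq hsq
  have h0s := toReal_pos_of h1 hs
  rw [← ENNReal.rpow_le_rpow_iff h0, eSum_rpow h1q hq]
  have e : ∀ a : ℝ≥0∞, a ^ q.toReal = a ^ s.toReal * a ^ (q.toReal - s.toReal) := fun a => by
    rw [← ENNReal.rpow_add_of_nonneg _ _ h0s.le (sub_nonneg.2 hle)]; congr 1; ring
  rw [e (eSum s f), eSum_rpow h1 hs, Finset.sum_mul]
  refine Finset.sum_le_sum fun i _ => ?_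
  rw [e]
  gcongr
  exact le_eSum h1 f i

lemma holder_real {p s r : ℝ≥0∞} (hr : 1 ≤ r) (hp0 : 1 ≤ p) (hs0 : 1 ≤ s) (hp : p ≠ ∞) (hs : s ≠ ∞)
    (h : 1 / r = 1 / p + 1 / s) :
    r ≠ ∞ ∧ 1 / r.toReal = 1 / p.toReal + 1 / s.toReal := by
  have a1 : 1 / p ≠ ∞ := by
    rw [one_div]; exact ENNReal.inv_ne_top.2 (by rintro rfl; simp at hp0)
  have a2 : 1 / s ≠ ∞ := by
    rw [one_div]; exact ENNReal.inv_ne_top.2 (by rintro rfl; simp at hs0)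
  constructor
  · rintro rfl
    simp only [one_div, ENNReal.inv_top] at h
    have h' := (add_eq_zero.1 h.symm).1
    exact hp (ENNReal.inv_eq_zero.1 h')
  · have := congrArg ENNReal.toReal h
    rw [ENNReal.toReal_add a1 a2] at this
    simpa using this

lemma eSum_holder {p s r : ℝ≥0∞} (hr : 1 ≤ r) (hp0 : 1 ≤ p) (hs0 : 1 ≤ s)
    (h : 1 / r = 1 / p + 1 / s) {ι : Type*} [Fintype ι] (f g : ι → ℝ≥0∞) :
    eSum r (fun i => f i * g i) ≤ eSum p f * eSum s g := by
  by_cases hp : p = ∞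
  · subst hp
    have : r = s := by simpa using h
    subst this
    rw [← eSum_const_mul hr]
    exact eSum_mono _ fun i => by gcongr; exact le_eSum hp0 f i
  by_cases hs : s = ∞
  · subst hs
    have : r = p := by simpa using h
    subst this
    rw [mul_comm, ← eSum_const_mul hr]
    exact eSum_mono _ fun i => by rw [mul_comm]; gcongr; exact le_eSum hs0 g i
  obtain ⟨hrt, hR⟩ := holder_real hr hp0 hs0 hp hs h
  have p0 := toReal_pos_of hp0 hp
  have s0 := toReal_pos_of hs0 hs
  have r0 := toReal_pos_of hr hrt
  have hT : Real.HolderTriple p.toReal s.toReal r.toReal := 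
    ⟨by simpa using hR.symm, p0, s0⟩
  have key := ENNReal.inner_le_Lp_mul_Lq Finset.univ (fun i => f i ^ r.toReal)
    (fun i => g i ^ r.toReal) hT.holderConjugate_div_div
  rw [← ENNReal.rpow_le_rpow_iff r0, eSum_rpow hr hrt, ENNReal.mul_rpow_of_nonneg _ _ r0.le,
    eSum_ne hp, eSum_ne hs]
  simp_rw [← ENNReal.rpow_mul, mul_div_cancel₀ _ r0.ne'] at key
  simp_rw [ENNReal.mul_rpow_of_nonneg _ _ r0.le, ← ENNReal.rpow_mul]
  convert key using 3 <;> field_simp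

lemma eSum_disjoint {q : ℝ≥0∞} (h1 : 1 ≤ q) {ι κ : Type*} [Fintype ι] [Fintype κ]
    [DecidableEq κ] (c : ι → Option κ) (g : ι → ℝ≥0∞) :
    eSum q (fun k => eSum q (fun j => if c j = some k then g j else 0)) ≤ eSum q g := by
  by_cases hq : q = ∞
  · subst hq
    simp_rw [eSum_top]
    refine iSup_le fun k => iSup_le fun j => ?_
    split_ifs
    · exact le_iSup g j
    · simp
  · have h0 := toReal_pos_of h1 hq
    rw [← ENNReal.rpow_le_rpow_iff h0, eSum_rpow h1 hq, eSum_rpow h1 hq]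
    simp_rw [eSum_rpow h1 hq]
    rw [Finset.sum_comm]
    refine Finset.sum_le_sum fun j _ => ?_
    rcases hc : c j with _ | k0
    · simp [h0]
    · rw [Finset.sum_eq_single k0]
      · simp
      · intro k _ hk
        simp [hk.symm, h0]
      · simp

/-- Extremal vectors for the Hölder inequality. -/
lemma exists_extremal {p s r : ℝ≥0∞} (hr : 1 ≤ r) (hp0 : 1 ≤ p) (hs0 : 1 ≤ s)
    (h : 1 / r = 1 / p + 1 / s) {ι : Type*} [Fintype ι] (t : ι → ℝ≥0) :
    ∃ σ : ι → ℝ≥0, eSum s (fun i => (σ i : ℝ≥0∞)) ≤ 1 ∧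
      eSum p (fun i => (t i : ℝ≥0∞)) ≤ eSum r (fun i => (σ i : ℝ≥0∞) * t i) := by
  classical
  by_cases hs : s = ∞
  · subst hs
    have : r = p := by simpa using h
    subst this
    exact ⟨fun _ => 1, by simp [eSum_top], by simp⟩
  have s0 := toReal_pos_of hs0 hs
  by_cases hp : p = ∞
  · subst hp
    have : r = s := by simpa using h
    subst this
    rcases isEmpty_or_nonempty ι with hi | hi
    · exact ⟨fun _ => 0, by simp [eSum_ne hs, s0], by simp [eSum_top]⟩
    · obtain ⟨i0, hi0⟩ := Finite.exists_max t
      refine ⟨Pi.single i0 1, ?_, ?_⟩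
      · rw [eSum_ne hs, Finset.sum_eq_single i0]
        · simp
        · intro j _ hj; simp [hj, s0]
        · simp
      · rw [eSum_top]
        refine iSup_le fun i => ?_
        refine le_trans ?_ (le_eSum hr _ i0)
        simpa using hi0 i
  obtain ⟨hrt, hR⟩ := holder_real hr hp0 hs0 hp hs h
  have p0 := toReal_pos_of hp0 hp
  have r0 := toReal_pos_of hr hrt
  set P := p.toReal
  set S := s.toReal
  set R := r.toReal
  have hco : ∀ (A : ℝ) (hA : 0 ≤ A) (u : ι → ℝ≥0), (∑ i, (u i : ℝ≥0∞) ^ A) ^ (1 / A)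
      = (((∑ i, u i ^ A) ^ (1 / A) : ℝ≥0) : ℝ≥0∞) := by
    intro A hA u
    rw [ENNReal.coe_rpow_of_nonneg _ (by positivity), ENNReal.ofNNReal_finsetSum]
    simp_rw [ENNReal.coe_rpow_of_nonneg _ hA]
  set M := ∑ i, t i ^ P with hM
  refine ⟨fun i => (t i ^ P / M) ^ (1 / S), ?_, ?_⟩
  · rw [eSum_ne hs, hco S s0.le]
    simp_rw [← NNReal.rpow_mul, one_div_mul_cancel s0.ne', NNReal.rpow_one]
    rw [← Finset.sum_div]
    refine ENNReal.coe_le_one_iff.2 (NNReal.rpow_le_one ?_ (by positivity))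
    exact div_self_le_one M
  · simp_rw [← ENNReal.coe_mul]
    rw [eSum_ne hp, eSum_ne hrt, hco P p0.le, hco R r0.le, ENNReal.coe_le_coe, ← hM]
    rcases eq_or_ne M 0 with h0 | h0
    · rw [h0, NNReal.zero_rpow (by positivity)]; exact zero_le
    · apply le_of_eq
      have hRP : P / S * R + R = P := by
        field_simp at hR ⊢; nlinarith
      have : ∀ i, ((t i ^ P / M) ^ (1 / S) * t i) ^ R = t i ^ P / M ^ (R / S) := by
        intro i
        rw [NNReal.mul_rpow, ← NNReal.rpow_mul, NNReal.div_rpow, ← NNReal.rpow_mul,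
          div_mul_eq_mul_div, ← NNReal.rpow_add_of_nonneg _ (by positivity) r0.le]
        congr 2
        · rw [← mul_assoc, mul_one_div]; exact hRP
        · field_simp
      simp_rw [this]
      rw [← Finset.sum_div, ← hM, NNReal.div_rpow, ← NNReal.rpow_mul, ← NNReal.rpow_sub h0]
      congr 1
      have : R / S * (1 / R) = 1 / S := by field_simp
      rw [this]; linarith

/-! ### Finitely supported elements of `ℓ_q` -/

lemma eSum_le_norm {q : ℝ≥0∞} (h1 : 1 ≤ q) (N : ℕ) (b : lp (fun _ : ℕ => ℝ) q) :
    eSum q (fun j : Fin N => ENNReal.ofReal |b j|) ≤ ENNReal.ofReal ‖b‖ := by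
  by_cases hq : q = ∞
  · subst hq
    rw [eSum_top]
    refine iSup_le fun j => ENNReal.ofReal_le_ofReal ?_
    exact lp.norm_apply_le_norm (by simp) b j
  · have h0 := toReal_pos_of h1 hq
    rw [← ENNReal.rpow_le_rpow_iff h0, eSum_rpow h1 hq]
    simp_rw [ENNReal.ofReal_rpow_of_nonneg (abs_nonneg _) h0.le]
    rw [ENNReal.ofReal_rpow_of_nonneg (lp.norm_nonneg' b) h0.le,
      ← ENNReal.ofReal_sum_of_nonneg (fun _ _ => by positivity)]
    refine ENNReal.ofReal_le_ofReal ?_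
    have := lp.sum_rpow_le_norm_rpow h0 b (Finset.range N)
    rwa [Finset.sum_range] at this

lemma norm_le_one_of_eSum {q : ℝ≥0∞} (h1 : 1 ≤ q) (N : ℕ) (b : lp (fun _ : ℕ => ℝ) q)
    (hb : ∀ j, N ≤ j → b j = 0)
    (h : eSum q (fun j : Fin N => ENNReal.ofReal |b j|) ≤ 1) : ‖b‖ ≤ 1 := by
  by_cases hq : q = ∞
  · subst hq
    refine lp.norm_le_of_forall_le zero_le_one fun j => ?_
    by_cases hj : j < N
    · have := (le_eSum h1 (fun j : Fin N => ENNReal.ofReal |b j|) ⟨j, hj⟩).trans h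
      simpa using this
    · simp [hb j (not_lt.1 hj)]
  · have h0 := toReal_pos_of h1 hq
    refine lp.norm_le_of_forall_sum_le h0 zero_le_one fun F => ?_
    rw [← ENNReal.rpow_le_rpow_iff h0, eSum_rpow h1 hq] at h
    simp_rw [ENNReal.ofReal_rpow_of_nonneg (abs_nonneg _) h0.le] at h
    rw [← ENNReal.ofReal_sum_of_nonneg (fun _ _ => by positivity)] at h
    simp only [ENNReal.one_rpow, ENNReal.ofReal_le_one] at h
    rw [Real.one_rpow]
    refine le_trans ?_ h
    rw [← Finset.sum_range (fun j => |b j| ^ q.toReal)]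
    calc ∑ i ∈ F, ‖b i‖ ^ q.toReal ≤ ∑ i ∈ F ∪ Finset.range N, ‖b i‖ ^ q.toReal :=
          Finset.sum_le_sum_of_subset_of_nonneg Finset.subset_union_left
            fun _ _ _ => by positivity
      _ = ∑ i ∈ Finset.range N, ‖b i‖ ^ q.toReal := by
          symm
          refine Finset.sum_subset Finset.subset_union_right fun j _ hj => ?_
          rw [hb j (by simpa using hj)]
          simp [ne_of_gt h0]

/-- The element of `ℓ_q` with finitely many prescribed first coordinates. -/
def finLp (q : ℝ≥0∞) {N : ℕ} (a : Fin N → ℝ) : lp (fun _ : ℕ => ℝ) q :=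
  ∑ j : Fin N, lp.single q (j : ℕ) (a j)

lemma finLp_apply (q : ℝ≥0∞) {N : ℕ} (a : Fin N → ℝ) (j : Fin N) :
    finLp q a (j : ℕ) = a j := by
  unfold finLp
  rw [lp.coeFn_sum, Finset.sum_apply, Finset.sum_eq_single j]
  · simp
  · intro i _ hi
    exact lp.single_apply_ne q _ _ (fun h => hi (Fin.ext h.symm))
  · simp

lemma finLp_apply_of_le (q : ℝ≥0∞) {N : ℕ} (a : Fin N → ℝ) (j : ℕ) (hj : N ≤ j) :
    finLp q a j = 0 := by
  unfold finLp
  rw [lp.coeFn_sum, Finset.sum_apply]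
  refine Finset.sum_eq_zero fun i _ => ?_
  exact lp.single_apply_ne q _ _ (by have := i.2; omega)

lemma norm_finLp_le {q : ℝ≥0∞} (h1 : 1 ≤ q) {N : ℕ} (a : Fin N → ℝ)
    (h : eSum q (fun j => ENNReal.ofReal |a j|) ≤ 1) : ‖finLp q a‖ ≤ 1 := by
  refine norm_le_one_of_eSum h1 N _ (finLp_apply_of_le q a) ?_
  simpa only [finLp_apply] using h

/-! ### The key estimate -/

lemma eSum_one {ι : Type*} [Fintype ι] (f : ι → ℝ≥0∞) : eSum 1 f = ∑ i, f i := by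
  simp [eSum_ne]

lemma ofReal_abs_sum_le {ι : Type*} [Fintype ι] (a : ι → ℝ) :
    ENNReal.ofReal |∑ i, a i| ≤ ∑ i, ENNReal.ofReal |a i| := by
  rw [← ENNReal.ofReal_sum_of_nonneg (fun _ _ => abs_nonneg _)]
  exact ENNReal.ofReal_le_ofReal (Finset.abs_sum_le_sum_abs _ _)

section key
variable {X Y : Type*} [NormedAddCommGroup X] [NormedSpace ℝ X]
    [NormedAddCommGroup Y] [NormedSpace ℝ Y]

lemma core_extreme {q p r s q' : ℝ≥0∞} (hq : 1 ≤ q) (hp : 1 ≤ p)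
    (hconj : 1 / q + 1 / q' = 1) (hq' : 1 ≤ q') (hr : 1 ≤ r) (hs : 1 ≤ s)
    (hsq' : s ≤ q') (hrps : 1 / r = 1 / p + 1 / s) (T : X →L[ℝ] Y) {n N : ℕ}
    (w : Fin N → X) (hw : weakLq q w ≤ 1) (σ : Fin N → ℝ)
    (hσ : eSum s (fun j => ENNReal.ofReal |σ j|) ≤ 1) (v : Fin N → Fin n → ℝ)
    (c : Fin N → Option (Fin n)) (hv : ∀ j k, |v j k| ≤ if c j = some k then 1 else 0) :
    eSum r (fun k => ENNReal.ofReal ‖T (∑ j, (σ j * v j k) • w j)‖) ≤ piN p q n T := by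
  set L : Fin n → ℝ≥0∞ := fun k =>
    eSum s (fun j => if c j = some k then ENNReal.ofReal |σ j| else 0) with hL
  have hLs : eSum s L ≤ 1 := (eSum_disjoint hs c _).trans hσ
  have hLt : ∀ k, L k ≠ ∞ := fun k =>
    (((le_eSum hs L k).trans hLs).trans_lt ENNReal.one_lt_top).ne
  set z : Fin n → X := fun k => ∑ j, (σ j * v j k) • w j with hz
  set y : Fin n → X := fun k => (L k).toReal⁻¹ • z k with hy
  have hσv : ∀ j k, ENNReal.ofReal |σ j * v j k| ≤
      if c j = some k then ENNReal.ofReal |σ j| else 0 := by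
    intro j k
    have := hv j k
    split_ifs at this ⊢ with hc
    · refine ENNReal.ofReal_le_ofReal ?_
      rw [abs_mul]
      exact mul_le_of_le_one_right (abs_nonneg _) this
    · have : v j k = 0 := abs_nonpos_iff.1 this
      simp [this]
  have hyw : weakLq q y ≤ 1 := by
    refine iSup_le fun f => ?_
    have hf := (le_iSup (fun f : {f : X →L[ℝ] ℝ // ‖f‖ ≤ 1} =>
      eSum q fun k => ENNReal.ofReal |f.1 (w k)|) f).trans hw
    refine le_trans ?_ hf
    refine le_trans (eSum_mono q fun k => ?_)
      (eSum_disjoint hq c (fun j => ENNReal.ofReal |f.1 (w j)|))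
    set E := eSum q (fun j => if c j = some k then ENNReal.ofReal |f.1 (w j)| else 0)
    have h1 : ENNReal.ofReal |f.1 (z k)| ≤ E * L k := by
      have e : f.1 (z k) = ∑ j, (σ j * v j k) * f.1 (w j) := by
        simp [hz, map_sum]
      rw [e]
      refine (ofReal_abs_sum_le _).trans ?_
      refine le_trans ?_ (mul_le_mul_right (eSum_anti hs hsq' _) _)
      refine le_trans ?_ (eSum_holder le_rfl hq hq' (by rw [hconj]; simp) _ _)
      rw [eSum_one]
      refine Finset.sum_le_sum fun j _ => ?_
      rw [abs_mul, ENNReal.ofReal_mul (abs_nonneg _), mul_comm]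
      have := hσv j k
      split_ifs at this ⊢ with hc
      · gcongr
      · rw [nonpos_iff_eq_zero.1 this]; simp
    simp only [hy, map_smul, smul_eq_mul]
    rw [abs_mul, ENNReal.ofReal_mul (abs_nonneg _)]
    refine (mul_le_mul_right h1 _).trans ?_
    rw [mul_comm E, ← mul_assoc]
    refine mul_le_of_le_one_left zero_le ?_
    rw [abs_of_nonneg (by positivity)]
    conv_lhs => rw [← ENNReal.ofReal_toReal (hLt k)]
    rw [← ENNReal.ofReal_mul (by positivity), ENNReal.ofReal_le_one]
    simp only [ENNReal.toReal_ofReal ENNReal.toReal_nonneg]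
    exact inv_mul_le_one
  have hzy : ∀ k, ENNReal.ofReal ‖T (z k)‖ ≤ ENNReal.ofReal ‖T (y k)‖ * L k := by
    intro k
    rcases eq_or_ne (L k) 0 with h0 | h0
    · have : z k = 0 := by
        refine Finset.sum_eq_zero fun j _ => ?_
        have h2 := (hσv j k).trans (le_eSum hs
          (fun j => if c j = some k then ENNReal.ofReal |σ j| else 0) j)
        have h3 : ENNReal.ofReal |σ j * v j k| ≤ 0 := h2.trans h0.le
        have h4 : σ j * v j k = 0 := by simpa using h3
        rw [h4, zero_smul]
      simp [this]
    · have h1 : (L k).toReal ≠ 0 := ENNReal.toReal_ne_zero.2 ⟨h0, hLt k⟩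
      have : z k = (L k).toReal • y k := by simp [hy, smul_smul, h1]
      rw [this, map_smul, norm_smul, ENNReal.ofReal_mul (norm_nonneg _), mul_comm,
        Real.norm_of_nonneg ENNReal.toReal_nonneg, ENNReal.ofReal_toReal (hLt k)]
  refine (eSum_mono r hzy).trans ?_
  refine (eSum_holder hr hp hs hrps _ _).trans ?_
  refine (mul_le_of_le_one_right zero_le hLs).trans ?_
  exact le_iSup (fun x : {x : Fin n → X // weakLq q x ≤ 1} =>
    eSum p fun k => ENNReal.ofReal ‖T (x.1 k)‖) ⟨y, hyw⟩

/-- Extreme points (and zero) of the unit ball of `ℓ_1^n`. -/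
def crossPts (n : ℕ) : Set (Fin n → ℝ) :=
  {u | ∃ c : Option (Fin n), ∀ k, |u k| ≤ if c = some k then 1 else 0}

lemma mem_hull_crossPts {n : ℕ} (u : Fin n → ℝ) (hu : ∑ k, |u k| ≤ 1) :
    u ∈ convexHull ℝ (crossPts n) := by
  have hc := convex_convexHull ℝ (crossPts n)
  let wt : Option (Fin n) → ℝ := fun o => o.elim (1 - ∑ k, |u k|) (fun k => |u k|)
  let pt : Option (Fin n) → Fin n → ℝ := fun o =>
    o.elim 0 (fun k => Pi.single k (SignType.sign (u k) : ℝ))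
  have := hc.sum_mem (t := Finset.univ) (w := wt) (z := pt) ?_ ?_ ?_
  · convert this using 1
    rw [Fintype.sum_option]
    ext k
    simp only [wt, pt, Option.elim, smul_zero, zero_add, Finset.sum_apply, Pi.smul_apply,
      smul_eq_mul]
    rw [Finset.sum_eq_single k]
    · simp [abs_mul_sign]
    · intro b _ hb
      simp [hb.symm]
    · simp
  · rintro (_ | k) _
    · simpa [wt] using hu
    · simp [wt]
  · rw [Fintype.sum_option]; simp [wt]
  · rintro o _
    apply subset_convexHull
    refine ⟨o, fun k => ?_⟩
    rcases o with _ | k'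
    · simp [pt]
    · simp only [pt, Option.elim, Option.some.injEq, Pi.single_apply]
      by_cases h : k = k'
      · subst h
        rcases lt_trichotomy (u k) 0 with h | h | h <;> simp [h]
      · simp [h, Ne.symm h]

lemma core {q p r s q' : ℝ≥0∞} (hq : 1 ≤ q) (hp : 1 ≤ p)
    (hconj : 1 / q + 1 / q' = 1) (hq' : 1 ≤ q') (hr : 1 ≤ r) (hs : 1 ≤ s)
    (hsq' : s ≤ q') (hrps : 1 / r = 1 / p + 1 / s) (T : X →L[ℝ] Y) {n N : ℕ}
    (w : Fin N → X) (hw : weakLq q w ≤ 1) (σ : Fin N → ℝ)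
    (hσ : eSum s (fun j => ENNReal.ofReal |σ j|) ≤ 1) (v : Fin N → Fin n → ℝ)
    (hv : ∀ j, ∑ k, |v j k| ≤ 1) :
    eSum r (fun k => ENNReal.ofReal ‖T (∑ j, (σ j * v j k) • w j)‖) ≤ piN p q n T := by
  set C := piN p q n T
  let G : Set (Fin N → Fin n → ℝ) :=
    {v | eSum r (fun k => ENNReal.ofReal ‖T (∑ j, (σ j * v j k) • w j)‖) ≤ C}
  have hG : Convex ℝ G := by
    intro v hv v' hv' a b ha hb hab
    change eSum r _ ≤ C
    have hv : eSum r _ ≤ C := hv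
    have hv' : eSum r _ ≤ C := hv'
    calc eSum r (fun k => ENNReal.ofReal ‖T (∑ j, (σ j * (a • v + b • v') j k) • w j)‖)
        ≤ eSum r (fun k => ENNReal.ofReal a * ENNReal.ofReal ‖T (∑ j, (σ j * v j k) • w j)‖
          + ENNReal.ofReal b * ENNReal.ofReal ‖T (∑ j, (σ j * v' j k) • w j)‖) := by
          refine eSum_mono r fun k => ?_
          rw [← ENNReal.ofReal_mul ha, ← ENNReal.ofReal_mul hb,
            ← ENNReal.ofReal_add (by positivity) (by positivity)]
          refine ENNReal.ofReal_le_ofReal ?_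
          have : ∑ j, (σ j * (a • v + b • v') j k) • w j
              = a • ∑ j, (σ j * v j k) • w j + b • ∑ j, (σ j * v' j k) • w j := by
            rw [Finset.smul_sum, Finset.smul_sum, ← Finset.sum_add_distrib]
            refine Finset.sum_congr rfl fun j _ => ?_
            rw [smul_smul, smul_smul, ← add_smul]
            simp only [Pi.add_apply, Pi.smul_apply, smul_eq_mul]
            congr 1; ring
          rw [this, map_add, map_smul, map_smul]
          refine (norm_add_le _ _).trans (le_of_eq ?_)
          rw [norm_smul, norm_smul, Real.norm_of_nonneg ha, Real.norm_of_nonneg hb]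
      _ ≤ ENNReal.ofReal a * C + ENNReal.ofReal b * C := by
          refine (eSum_add_le hr _ _).trans ?_
          rw [eSum_const_mul hr, eSum_const_mul hr]
          gcongr
      _ = C := by
          rw [← add_mul, ← ENNReal.ofReal_add ha hb, hab]; simp
  have hsub : (Set.univ.pi fun _ : Fin N => crossPts n) ⊆ G := by
    intro v hv
    have : ∀ j, ∃ c : Option (Fin n), ∀ k, |v j k| ≤ if c = some k then 1 else 0 :=
      fun j => hv j (Set.mem_univ j)
    choose c hc using this
    exact core_extreme hq hp hconj hq' hr hs hsq' hrps T w hw σ hσ v c hc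
  have := convexHull_min hsub hG
  refine this ?_
  rw [convexHull_pi]
  exact fun j _ => mem_hull_crossPts _ (hv j)

end key

section operators
variable {X Y : Type*} [NormedAddCommGroup X] [NormedSpace ℝ X]
    [NormedAddCommGroup Y] [NormedSpace ℝ Y]

lemma finLp_eq_smul (q : ℝ≥0∞) {N : ℕ} (a : Fin N → ℝ) :
    finLp q a = ∑ j : Fin N, a j • lp.single (E := fun _ : ℕ => ℝ) q (j : ℕ) (1 : ℝ) := by
  unfold finLp
  refine Finset.sum_congr rfl fun j _ => ?_
  rw [← lp.single_smul]; simp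

lemma weak_of_norm {q q' : ℝ≥0∞} [Fact (1 ≤ q')] (hq : 1 ≤ q) (hconj : 1 / q + 1 / q' = 1)
    (V : lp (fun _ : ℕ => ℝ) q' →L[ℝ] X) (hV : ‖V‖ ≤ 1) (N : ℕ) :
    weakLq q (fun j : Fin N => V (lp.single q' (j : ℕ) (1 : ℝ))) ≤ 1 := by
  have hq' : 1 ≤ q' := Fact.out
  refine iSup_le fun f => ?_
  set g : Fin N → ℝ := fun j => f.1 (V (lp.single q' (j : ℕ) (1 : ℝ))) with hg
  obtain ⟨a, ha, hag⟩ := exists_extremal (p := q) (s := q') (r := 1) le_rfl hq hq'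
    (by rw [hconj]; simp) (fun j => ‖g j‖₊)
  have e1 : ∀ j, ENNReal.ofReal |g j| = (‖g j‖₊ : ℝ≥0∞) := fun j => by
    rw [← Real.norm_eq_abs, ofReal_norm]; rfl
  have : eSum q (fun j => ENNReal.ofReal |g j|) ≤ 1 := by
    simp_rw [e1]
    refine hag.trans ?_
    rw [eSum_one]
    set b : Fin N → ℝ := fun j => a j * (SignType.sign (g j) : ℝ) with hb
    have e2 : ∑ j, (a j : ℝ≥0∞) * (‖g j‖₊ : ℝ≥0∞) = ENNReal.ofReal (f.1 (V (finLp q' b))) := by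
      have : f.1 (V (finLp q' b)) = ∑ j, (a j : ℝ) * |g j| := by
        rw [finLp_eq_smul, map_sum, map_sum]
        refine Finset.sum_congr rfl fun j _ => ?_
        rw [map_smul, map_smul, smul_eq_mul]
        change b j * g j = _
        simp only [hb]
        rw [mul_assoc, sign_mul_self]
      rw [this, ENNReal.ofReal_sum_of_nonneg (fun _ _ => by positivity)]
      refine Finset.sum_congr rfl fun j _ => ?_
      rw [ENNReal.ofReal_mul (by positivity), e1, ENNReal.ofReal_coe_nnreal]
    rw [e2, ENNReal.ofReal_le_one]
    have hbn : ‖finLp q' b‖ ≤ 1 := by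
      refine norm_finLp_le hq' b (le_trans (eSum_mono _ fun j => ?_) ha)
      rw [← ENNReal.ofReal_coe_nnreal]
      refine ENNReal.ofReal_le_ofReal ?_
      simp only [hb, abs_mul, NNReal.abs_eq]
      refine mul_le_of_le_one_right (by positivity) ?_
      rcases lt_trichotomy (g j) 0 with h | h | h <;> simp [h]
    calc f.1 (V (finLp q' b)) ≤ ‖f.1 (V (finLp q' b))‖ := le_abs_self _
      _ ≤ 1 * (1 * 1) := by
        refine (f.1.le_of_opNorm_le f.2 _).trans ?_
        gcongr
        exact (V.le_of_opNorm_le hV _).trans (by gcongr)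
      _ = 1 := by norm_num
  exact this

lemma coord_weak {n : ℕ} (x : Fin n → lp (fun _ : ℕ => ℝ) ∞) (hx : weakLq 1 x ≤ 1) (j : ℕ) :
    ∑ k, |x k j| ≤ 1 := by
  let f : lp (fun _ : ℕ => ℝ) ∞ →L[ℝ] ℝ := lp.evalCLM ℝ (fun _ : ℕ => ℝ) ∞ j
  have hf : ‖f‖ ≤ 1 := by
    refine ContinuousLinearMap.opNorm_le_bound _ zero_le_one fun b => ?_
    rw [one_mul]
    exact lp.norm_apply_le_norm (by simp) b j
  have := (le_iSup (fun f : {f : lp (fun _ : ℕ => ℝ) ∞ →L[ℝ] ℝ // ‖f‖ ≤ 1} =>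
      eSum 1 fun k => ENNReal.ofReal |f.1 (x k)|) ⟨f, hf⟩).trans hx
  rw [eSum_one, ← ENNReal.ofReal_sum_of_nonneg (fun _ _ => abs_nonneg _),
    ENNReal.ofReal_le_one] at this
  exact this

lemma tendsto_finLp {q : ℝ≥0∞} [Fact (1 ≤ q)] (hq : q ≠ ∞) (b : lp (fun _ : ℕ => ℝ) q) :
    Filter.Tendsto (fun N : ℕ => finLp q (fun j : Fin N => b j)) Filter.atTop (nhds b) := by
  have := (lp.hasSum_single hq b).tendsto_sum_nat
  refine this.congr fun N => ?_
  rw [Finset.sum_range]; rfl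

lemma finLp_trunc_apply (q : ℝ≥0∞) (N : ℕ) (b : ℕ → ℝ) (j : ℕ) :
    finLp q (fun j : Fin N => b j) j = if j < N then b j else 0 := by
  split_ifs with h
  · exact finLp_apply q (fun j : Fin N => b j) ⟨j, h⟩
  · exact finLp_apply_of_le q _ j (not_lt.1 h)

lemma tendsto_diag {s q' : ℝ≥0∞} [Fact (1 ≤ q')] [Fact (1 ≤ s)] (hs : s ≠ ∞)
    (σ : lp (fun _ : ℕ => ℝ) s) (τ : lp (fun _ : ℕ => ℝ) ∞) (b : lp (fun _ : ℕ => ℝ) q')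
    (hb : ∀ j, b j = σ j * τ j) :
    Filter.Tendsto (fun N : ℕ => finLp q' (fun j : Fin N => b j)) Filter.atTop (nhds b) := by
  by_cases hq : q' = ∞
  · subst hq
    have h1 := tendsto_finLp hs σ
    rw [tendsto_iff_norm_sub_tendsto_zero] at h1 ⊢
    have h2 := h1.mul_const ‖τ‖
    rw [zero_mul] at h2
    refine squeeze_zero (fun _ => norm_nonneg _) (fun N => ?_) h2
    refine lp.norm_le_of_forall_le (by positivity) fun j => ?_
    have h3 := lp.norm_apply_le_norm (p := s) (by have : 1 ≤ s := Fact.out; rintro rfl; simp at this)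
      (finLp s (fun j : Fin N => σ j) - σ) j
    have h4 := lp.norm_apply_le_norm (by simp) τ j
    refine le_trans (le_of_eq ?_) (mul_le_mul h3 h4 (norm_nonneg _) (norm_nonneg _))
    rw [← norm_mul]
    congr 1
    rw [lp.coeFn_sub, lp.coeFn_sub, Pi.sub_apply, Pi.sub_apply, finLp_trunc_apply,
      finLp_trunc_apply, hb]
    split_ifs <;> ring
  · exact tendsto_finLp hq b

lemma upper_bound {q p r s q' : ℝ≥0∞} (hq : 1 ≤ q) (hqp : q ≤ p)
    (hconj : 1 / q + 1 / q' = 1) [Fact (1 ≤ q')] [Fact (1 ≤ s)] (hr : 1 ≤ r)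
    (hsq' : s ≤ q') (hrps : 1 / r = 1 / p + 1 / s)
    (T : X →L[ℝ] Y) (n : ℕ) (σ : lp (fun _ : ℕ => ℝ) s) (V : lp (fun _ : ℕ => ℝ) q' →L[ℝ] X)
    (D : lp (fun _ : ℕ => ℝ) ∞ →L[ℝ] lp (fun _ : ℕ => ℝ) q') (hσ : ‖σ‖ ≤ 1) (hV : ‖V‖ ≤ 1)
    (hD : ∀ (τ : lp (fun _ : ℕ => ℝ) ∞) (k : ℕ), D τ k = σ k * τ k) :
    piN r 1 n (T.comp (V.comp D)) ≤ piN p q n T := by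
  have hs1 : 1 ≤ s := Fact.out
  have hq' : 1 ≤ q' := Fact.out
  have hp : 1 ≤ p := hq.trans hqp
  refine iSup_le fun x => ?_
  obtain ⟨x, hx⟩ := x
  by_cases hs : s = ∞
  · subst hs
    obtain rfl : q' = ∞ := top_le_iff.1 hsq'
    have hrp : r = p := by simpa using hrps
    have hq1 : q = 1 := by simpa using hconj
    subst hrp hq1
    refine le_iSup (fun x : {x : Fin n → X // weakLq 1 x ≤ 1} =>
      eSum r fun k => ENNReal.ofReal ‖T (x.1 k)‖) ⟨fun k => V (D (x k)), ?_⟩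
    refine iSup_le fun f => ?_
    have hDn : ‖D‖ ≤ 1 := by
      refine ContinuousLinearMap.opNorm_le_bound _ zero_le_one fun τ => ?_
      refine lp.norm_le_of_forall_le (by positivity) fun j => ?_
      rw [hD, norm_mul]
      exact mul_le_mul ((lp.norm_apply_le_norm (by simp) σ j).trans hσ)
        (lp.norm_apply_le_norm (by simp) τ j) (norm_nonneg _) zero_le_one
    have hn : ‖f.1.comp (V.comp D)‖ ≤ 1 := by
      refine (ContinuousLinearMap.opNorm_comp_le _ _).trans ?_
      refine mul_le_one₀ f.2 (norm_nonneg _) ?_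
      refine (ContinuousLinearMap.opNorm_comp_le _ _).trans ?_
      exact mul_le_one₀ hV (norm_nonneg _) hDn
    exact (le_iSup (fun f : {f : lp (fun _ : ℕ => ℝ) ∞ →L[ℝ] ℝ // ‖f‖ ≤ 1} =>
      eSum 1 fun k => ENNReal.ofReal |f.1 (x k)|) ⟨_, hn⟩).trans hx
  have hrt : r ≠ ∞ := by
    rintro rfl
    simp only [one_div, ENNReal.inv_top] at hrps
    exact hs (ENNReal.inv_eq_zero.1 (add_eq_zero.1 hrps.symm).2)
  have r0 := toReal_pos_of hr hrt
  have key : ∀ N : ℕ, eSum r (fun k => ENNReal.ofReal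
      ‖T (V (finLp q' (fun j : Fin N => D (x k) j)))‖) ≤ piN p q n T := by
    intro N
    have := core hq hp hconj hq' hr hs1 hsq' hrps T (n := n) _ (weak_of_norm hq hconj V hV N)
      (fun j : Fin N => σ j)
      ((eSum_le_norm hs1 N σ).trans (ENNReal.ofReal_le_one.2 hσ)) (fun j k => x k j)
      (fun j => coord_weak x hx j)
    refine le_of_eq_of_le ?_ this
    congr 1
    ext k
    rw [finLp_eq_smul, map_sum]
    simp_rw [map_smul, hD]
  refine le_of_tendsto' (x := Filter.atTop) ?_ key
  simp_rw [eSum_ne hrt]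
  refine (ENNReal.continuous_rpow_const.tendsto _).comp ?_
  refine tendsto_finsetSum _ fun k _ => ?_
  refine (ENNReal.continuous_rpow_const.tendsto _).comp ?_
  refine (ENNReal.continuous_ofReal.tendsto _).comp ?_
  have hc : Continuous fun b => ‖T (V b)‖ := by fun_prop
  exact (hc.tendsto _).comp (tendsto_diag hs σ (x k) (D (x k)) (hD (x k)))

lemma lower_bound {q p r s q' : ℝ≥0∞} (hq : 1 ≤ q) (hqp : q ≤ p)
    (hconj : 1 / q + 1 / q' = 1) [Fact (1 ≤ q')] [Fact (1 ≤ s)] (hr : 1 ≤ r)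
    (hrps : 1 / r = 1 / p + 1 / s)
    (T : X →L[ℝ] Y) (n : ℕ) (x : Fin n → X) (hx : weakLq q x ≤ 1) :
    ∃ (σ : lp (fun _ : ℕ => ℝ) s) (V : lp (fun _ : ℕ => ℝ) q' →L[ℝ] X)
        (D : lp (fun _ : ℕ => ℝ) ∞ →L[ℝ] lp (fun _ : ℕ => ℝ) q'),
        ‖σ‖ ≤ 1 ∧ ‖V‖ ≤ 1 ∧ (∀ (τ : lp (fun _ : ℕ => ℝ) ∞) (k : ℕ), D τ k = σ k * τ k) ∧
        eSum p (fun k => ENNReal.ofReal ‖T (x k)‖) ≤ piN r 1 n (T.comp (V.comp D)) := by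
  have hs1 : 1 ≤ s := Fact.out
  have hq' : 1 ≤ q' := Fact.out
  have hp : 1 ≤ p := hq.trans hqp
  obtain ⟨a, ha, hat⟩ := exists_extremal hr hp hs1 hrps (fun k => ‖T (x k)‖₊)
  let V : lp (fun _ : ℕ => ℝ) q' →L[ℝ] X :=
    ∑ k : Fin n, (lp.evalCLM ℝ (fun _ : ℕ => ℝ) q' (k : ℕ)).smulRight (x k)
  have hVa : ∀ b, V b = ∑ k : Fin n, b k • x k := by
    intro b
    simp only [V, ContinuousLinearMap.sum_apply, ContinuousLinearMap.smulRight_apply]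
    rfl
  let D : lp (fun _ : ℕ => ℝ) ∞ →L[ℝ] lp (fun _ : ℕ => ℝ) q' :=
    ∑ k : Fin n, (lp.evalCLM ℝ (fun _ : ℕ => ℝ) ∞ (k : ℕ)).smulRight
      (lp.single q' (k : ℕ) (a k : ℝ))
  have hDa : ∀ τ, D τ = finLp q' (fun k : Fin n => (a k : ℝ) * τ k) := by
    intro τ
    simp only [D, ContinuousLinearMap.sum_apply, ContinuousLinearMap.smulRight_apply, finLp]
    refine Finset.sum_congr rfl fun k _ => ?_
    rw [← lp.single_smul, smul_eq_mul, mul_comm]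
    rfl
  refine ⟨finLp s (fun k => (a k : ℝ)), V, D, ?_, ?_, ?_, ?_⟩
  · refine norm_finLp_le hs1 _ ?_
    simpa using ha
  · refine ContinuousLinearMap.opNorm_le_bound _ zero_le_one fun b => ?_
    obtain ⟨f, hf, hfb⟩ := exists_dual_vector'' ℝ (V b)
    have hfb' : ‖V b‖ = f (V b) := hfb.symm
    rw [hfb', one_mul, ← ENNReal.ofReal_le_ofReal_iff (norm_nonneg _), hVa, map_sum]
    refine (ENNReal.ofReal_le_ofReal (le_abs_self _)).trans ?_
    refine (ofReal_abs_sum_le _).trans ?_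
    have h1 := eSum_holder (r := 1) le_rfl hq hq' (by rw [hconj]; simp)
      (fun k => ENNReal.ofReal |f (x k)|) (fun k : Fin n => ENNReal.ofReal |b k|)
    rw [eSum_one] at h1
    have h2 := (le_iSup (fun f : {f : X →L[ℝ] ℝ // ‖f‖ ≤ 1} =>
      eSum q fun k => ENNReal.ofReal |f.1 (x k)|) ⟨f, hf⟩).trans hx
    refine le_trans (le_of_eq ?_) (h1.trans ((mul_le_of_le_one_left zero_le h2).trans
      (eSum_le_norm hq' n b)))
    refine Finset.sum_congr rfl fun k _ => ?_
    rw [map_smul, smul_eq_mul, abs_mul, ENNReal.ofReal_mul (abs_nonneg _), mul_comm]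
  · intro τ k
    rw [hDa]
    by_cases hk : k < n
    · rw [finLp_apply q' _ ⟨k, hk⟩, finLp_apply s _ ⟨k, hk⟩]
    · rw [finLp_apply_of_le q' _ k (not_lt.1 hk), finLp_apply_of_le s _ k (not_lt.1 hk), zero_mul]
  · have hw := weak_of_norm (q := 1) (q' := ∞) le_rfl (by simp)
      (ContinuousLinearMap.id ℝ (lp (fun _ : ℕ => ℝ) ∞)) ContinuousLinearMap.norm_id_le n
    refine le_trans ?_ (le_iSup (fun x : {x : Fin n → lp (fun _ : ℕ => ℝ) ∞ // weakLq 1 x ≤ 1} =>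
      eSum r fun k => ENNReal.ofReal ‖T.comp (V.comp D) (x.1 k)‖) ⟨_, hw⟩)
    have e1 : ∀ k, ENNReal.ofReal ‖T (x k)‖ = (‖T (x k)‖₊ : ℝ≥0∞) := fun k => by
      rw [ofReal_norm]; rfl
    simp_rw [e1]
    refine hat.trans (le_of_eq ?_)
    congr 1
    ext k
    have hVD : V (D (lp.single ∞ (k : ℕ) (1 : ℝ))) = (a k : ℝ) • x k := by
      rw [hVa, hDa, Finset.sum_eq_single k]
      · rw [finLp_apply]; simp
      · intro i _ hi
        rw [finLp_apply, lp.single_apply_ne ∞ _ _ (fun h => hi (Fin.ext h))]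
        simp
      · simp
    simp only [ContinuousLinearMap.comp_apply, ContinuousLinearMap.id_apply]
    rw [hVD, map_smul, norm_smul, ENNReal.ofReal_mul (norm_nonneg _), e1]
    simp

end operators

/-- quotient formula. For `1 ≤ q ≤ p ≤ ∞` and `1 ≤ r ≤ s ≤ q'`
with `1/r = 1/p + 1/s`, the `n`-vector `(p,q)`-summing norm of `T` equals the
supremum of the `n`-vector `(r,1)`-summing norms of `T ∘ V ∘ D_σ` over all
`V : ℓ_{q'} → X` of norm at most `1` and all diagonal operators
`D_σ : ℓ_∞ → ℓ_{q'}` with `‖σ‖_s ≤ 1`. -/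
theorem statement3 (q p r s q' : ℝ≥0∞) (hq : 1 ≤ q) (hqp : q ≤ p)
    (hconj : 1 / q + 1 / q' = 1) (hq' : 1 ≤ q')
    (hr : 1 ≤ r) (hrs : r ≤ s) (hsq' : s ≤ q') (hrps : 1 / r = 1 / p + 1 / s)
    (X Y : Type*) [NormedAddCommGroup X] [NormedSpace ℝ X] [CompleteSpace X]
    [NormedAddCommGroup Y] [NormedSpace ℝ Y] [CompleteSpace Y]
    (T : X →L[ℝ] Y) (n : ℕ) :
    haveI : Fact (1 ≤ q') := ⟨hq'⟩
    haveI : Fact (1 ≤ s) := ⟨le_trans hr hrs⟩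
    piN p q n T = sSup { a : ℝ≥0∞ |
      ∃ (σ : lp (fun _ : ℕ => ℝ) s) (V : lp (fun _ : ℕ => ℝ) q' →L[ℝ] X)
        (D : lp (fun _ : ℕ => ℝ) ∞ →L[ℝ] lp (fun _ : ℕ => ℝ) q'),
        ‖σ‖ ≤ 1 ∧ ‖V‖ ≤ 1 ∧ (∀ (τ : lp (fun _ : ℕ => ℝ) ∞) (k : ℕ), D τ k = σ k * τ k) ∧
        a = piN r 1 n (T.comp (V.comp D)) } := by
  haveI : Fact (1 ≤ q') := ⟨hq'⟩
  haveI : Fact (1 ≤ s) := ⟨le_trans hr hrs⟩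
  apply le_antisymm
  · refine iSup_le fun x => ?_
    obtain ⟨σ, V, D, h1, h2, h3, h4⟩ :=
      lower_bound (s := s) (q' := q') hq hqp hconj hr hrps T n x.1 x.2
    exact h4.trans (le_sSup ⟨σ, V, D, h1, h2, h3, rfl⟩)
  · refine sSup_le ?_
    rintro _ ⟨σ, V, D, h1, h2, h3, rfl⟩
    exact upper_bound hq hqp hconj hr hsq' hrps T n σ V D h1 h2 h3

end
end
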